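/- arXiv:2206.02132 — 5 statements merged into one kernel-verified Lean document; each statement's English description precedes it below -/
import Mathlib

section
/- Let u_1,…,u_m be κ-harmonic functions in ℝ^{d+1}₊, let F = (u_1,…,u_m) and |F| = (∑_{j=1}^m u_j²)^{1/2}. Then Δ_κ|F| ≥ 0 at every point (x,y) ∈ ℝ^{d+1}₊ with x regular at which |F(x,y)| > 0. -/
/-!
Write `f = |F|`. Near a point where `f > 0` the function `f` is `C²`, and differentiating
`f² = ∑ u_j²` twice in a direction `v` gives
`(∂_v f)² + f ∂_v² f = ∑ (∂_v u_j)² + ∑ u_j ∂_v² u_j`, while `f ∂_v f = ∑ u_j ∂_v u_j`.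
Cauchy–Schwarz yields `(∂_v f)² ≤ ∑ (∂_v u_j)²`, hence `f ∂_v² f ≥ ∑ u_j ∂_v² u_j`
(`sum_mul_pd2_le`). A second use of Cauchy–Schwarz, now between the values at `p` and at the
reflected point, compares the difference terms of `Δ_κ` (this is where `κ ≥ 0` enters); the drift
terms agree exactly. Summing up, `f Δ_κ f ≥ ∑ u_j Δ_κ u_j = 0`.
-/

open MeasureTheory Filter Metric
open scoped RealInnerProductSpace Topology

noncomputable section

/-- Euclidean space `ℝ^d`. -/
abbrev Ed (d : ℕ) : Type := EuclideanSpace ℝ (Fin d)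

/-- The reflection `σ_α(x) = x - ⟨α,x⟩α` (for roots normalized by `⟨α,α⟩ = 2`). -/
def reflAt {d : ℕ} (α x : Ed d) : Ed d := x - ⟪α, x⟫ • α

/-- The reflection group `G` generated by the reflections `σ_α`, `α ∈ R`, realized as the
submonoid of self-maps of `ℝ^d` generated by the reflections (each reflection is an
involution, so this is in fact a group of transformations). -/
def dunklGroup {d : ℕ} (R : Finset (Ed d)) : Submonoid (Function.End (Ed d)) :=
  Submonoid.closure {f : Function.End (Ed d) | ∃ α ∈ R, f = reflAt α}

/-- A (normalized) root system `R` with positive subsystem `Rp` and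
`G`-invariant nonnegative multiplicity function `κ`. -/
structure IsRootSystem {d : ℕ} (R Rp : Finset (Ed d)) (κ : Ed d → ℝ) : Prop where
  nonzero : ∀ α ∈ R, α ≠ (0 : Ed d)
  norm_two : ∀ α ∈ R, ⟪α, α⟫ = (2 : ℝ)
  refl_mem : ∀ α ∈ R, ∀ β ∈ R, reflAt α β ∈ R
  pos_sub : Rp ⊆ R
  pos_split : ∀ α ∈ R, (α ∈ Rp ∧ ¬(-α ∈ Rp)) ∨ (¬(α ∈ Rp) ∧ -α ∈ Rp)
  kappa_nonneg : ∀ α ∈ R, 0 ≤ κ α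
  kappa_inv : ∀ σ ∈ dunklGroup R, ∀ α ∈ R, κ (σ α) = κ α

/-- `x ∈ ℝ^d` is regular if `⟨α,x⟩ ≠ 0` for all roots `α ∈ R`. -/
def isRegular {d : ℕ} (R : Finset (Ed d)) (x : Ed d) : Prop :=
  ∀ α ∈ R, ⟪α, x⟫ ≠ (0 : ℝ)

/-- Second directional derivative of `u` at `p` in direction `v`. -/
def pd2 {d : ℕ} (u : Ed d × ℝ → ℝ) (p v : Ed d × ℝ) : ℝ :=
  fderiv ℝ (fun q => fderiv ℝ u q v) p v

/-- The Euclidean Laplacian on `ℝ^{d+1} = ℝ^d × ℝ`. -/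
def lapE {d : ℕ} (u : Ed d × ℝ → ℝ) (p : Ed d × ℝ) : ℝ :=
  (∑ i : Fin d, pd2 u p (EuclideanSpace.single i 1, 0)) + pd2 u p (0, 1)

/-- The Dunkl Laplacian `Δ_κ` on `ℝ^{d+1}` (the Dunkl operators act in the `x`-variables). -/
def dunklLap {d : ℕ} (Rp : Finset (Ed d)) (κ : Ed d → ℝ) (u : Ed d × ℝ → ℝ)
    (p : Ed d × ℝ) : ℝ :=
  lapE u p + 2 * ∑ α ∈ Rp, κ α *
    (fderiv ℝ u p (α, 0) / ⟪α, p.1⟫ - (u p - u (reflAt α p.1, p.2)) / ⟪α, p.1⟫ ^ 2)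

/-- The open upper half-space `ℝ^{d+1}₊`. -/
def upperHS (d : ℕ) : Set (Ed d × ℝ) := {p | 0 < p.2}

/-- `u` is `κ`-harmonic on `Ω`: `u` is `C²` on `Ω` and `Δ_κ u = 0` at every point of `Ω`
whose `x`-coordinate is regular. -/
def KHarmonicOn {d : ℕ} (R Rp : Finset (Ed d)) (κ : Ed d → ℝ) (u : Ed d × ℝ → ℝ)
    (Ω : Set (Ed d × ℝ)) : Prop :=
  ContDiffOn ℝ 2 u Ω ∧ ∀ p ∈ Ω, isRegular R p.1 → dunklLap Rp κ u p = 0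

/-- The cone `Γ_a(x)` of aperture `a` with vertex `(x,0)`. -/
def cone {d : ℕ} (a : ℝ) (x : Ed d) : Set (Ed d × ℝ) :=
  {p | 0 < p.2 ∧ dist p.1 x < a * p.2}

/-- The truncated cone `Γ_a^h(x)`. -/
def coneT {d : ℕ} (a h : ℝ) (x : Ed d) : Set (Ed d × ℝ) :=
  {p | 0 < p.2 ∧ p.2 < h ∧ dist p.1 x < a * p.2}

/-- `u` has a finite non-tangential limit at `(x,0)`. -/
def HasNTLimit {d : ℕ} (u : Ed d × ℝ → ℝ) (x : Ed d) : Prop :=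
  ∀ a > (0 : ℝ), ∃ L : ℝ, Tendsto u (𝓝[cone a x] (x, (0 : ℝ))) (𝓝 L)

/-- `u` is non-tangentially bounded at `(x,0)`. -/
def NTBounded {d : ℕ} (u : Ed d × ℝ → ℝ) (x : Ed d) : Prop :=
  ∃ a > (0 : ℝ), ∃ h > (0 : ℝ), ∃ M : ℝ, ∀ p ∈ coneT a h x, |u p| ≤ M

/-- A subset of `ℝ^d` is `G`-invariant. -/
def GInvSet {d : ℕ} (R : Finset (Ed d)) (E : Set (Ed d)) : Prop :=
  ∀ σ ∈ dunklGroup R, σ '' E = E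

/-- First-order identity `f ∂_v f = ∑ u_j ∂_v u_j` for `f = |F|`. -/
lemma sqrt_mul_fderiv {d m : ℕ} (u : Fin m → Ed d × ℝ → ℝ) (q v : Ed d × ℝ)
    (hu : ∀ j, DifferentiableAt ℝ (u j) q) (hq : 0 < ∑ j, u j q ^ 2) :
    Real.sqrt (∑ j, u j q ^ 2) * fderiv ℝ (fun z => Real.sqrt (∑ j, u j z ^ 2)) q v
      = ∑ j, u j q * fderiv ℝ (u j) q v := by
  have hS : HasFDerivAt (fun z => ∑ j, u j z ^ 2)
      (∑ j, (2 * u j q) • fderiv ℝ (u j) q) q := by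
    refine HasFDerivAt.fun_sum fun j _ => ?_
    simpa using (hu j).hasFDerivAt.pow 2
  have hs : Real.sqrt (∑ j, u j q ^ 2) ≠ 0 := (Real.sqrt_pos.2 hq).ne'
  rw [(hS.sqrt hq.ne').fderiv]
  simp only [_root_.smul_apply, _root_.sum_apply, smul_eq_mul,
    mul_assoc, ← Finset.mul_sum]
  field_simp

/-- Second-order comparison `∑ u_j ∂_v² u_j ≤ f ∂_v² f` for `f = |F|`. -/
lemma sum_mul_pd2_le {d m : ℕ} (u : Fin m → Ed d × ℝ → ℝ) (p v : Ed d × ℝ)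
    (hu : ∀ j, ContDiffAt ℝ 2 (u j) p) (hp : 0 < ∑ j, u j p ^ 2) :
    ∑ j, u j p * pd2 (u j) p v
      ≤ Real.sqrt (∑ j, u j p ^ 2) * pd2 (fun z => Real.sqrt (∑ j, u j z ^ 2)) p v := by
  set f : Ed d × ℝ → ℝ := fun z => Real.sqrt (∑ j, u j z ^ 2) with hf
  have hSc : ContDiffAt ℝ 2 (fun z => ∑ j, u j z ^ 2) p :=
    ContDiffAt.sum fun j _ => (hu j).pow 2
  have hfc : ContDiffAt ℝ 2 f p := hSc.sqrt hp.ne'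
  have hdiff : ∀ g : Ed d × ℝ → ℝ, ContDiffAt ℝ 2 g p →
      DifferentiableAt ℝ (fun q => fderiv ℝ g q v) p := fun g hg =>
    ((hg.fderiv_right (m := 1) (by norm_num)).differentiableAt (by norm_num)).clm_apply
      (differentiableAt_const v)
  have hev : (fun q => f q * fderiv ℝ f q v) =ᶠ[𝓝 p]
      fun q => ∑ j, u j q * fderiv ℝ (u j) q v := by
    have h1 : ∀ᶠ q in 𝓝 p, 0 < ∑ j, u j q ^ 2 :=
      hSc.continuousAt.eventually (lt_mem_nhds hp)
    have h2 : ∀ᶠ q in 𝓝 p, ∀ j, ContDiffAt ℝ 2 (u j) q :=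
      eventually_all.2 fun j => (hu j).eventually (by simp)
    filter_upwards [h1, h2] with q hq1 hq2
    exact sqrt_mul_fderiv u q v (fun j => (hq2 j).differentiableAt (by norm_num)) hq1
  have hL := (hfc.differentiableAt (by norm_num)).hasFDerivAt.mul (hdiff f hfc).hasFDerivAt
  have hR := HasFDerivAt.fun_sum (u := Finset.univ) fun j _ =>
    ((hu j).differentiableAt (by norm_num)).hasFDerivAt.mul (hdiff (u j) (hu j)).hasFDerivAt
  have hD := DFunLike.congr_fun (hL.unique (hR.congr_of_eventuallyEq hev)) v
  simp only [_root_.add_apply, _root_.smul_apply,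
    _root_.sum_apply, smul_eq_mul, Finset.sum_add_distrib] at hD
  have h1 : f p * fderiv ℝ f p v = ∑ j, u j p * fderiv ℝ (u j) p v := hev.self_of_nhds
  have hCS := Finset.sum_mul_sq_le_sq_mul_sq Finset.univ (fun j => u j p)
    (fun j => fderiv ℝ (u j) p v)
  have hsq : f p ^ 2 = ∑ j, u j p ^ 2 := Real.sq_sqrt hp.le
  rw [← h1, mul_pow, hsq] at hCS
  have hgrad := le_of_mul_le_mul_left hCS hp
  have hgrad' : fderiv ℝ f p v * fderiv ℝ f p v
      ≤ ∑ j, fderiv ℝ (u j) p v * fderiv ℝ (u j) p v := by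
    simpa only [sq] using hgrad
  change _ ≤ f p * pd2 f p v
  simp only [pd2]
  linarith

/-- **Proposition 4.4.** If `u_1, …, u_m` are `κ`-harmonic in `ℝ^{d+1}₊` and
`|F| = (∑ u_j²)^{1/2}`, then `Δ_κ |F| ≥ 0` wherever `|F| > 0` (at points with regular
`x`-coordinate). -/
theorem dunkl_subharmonicity_of_norm
    {d : ℕ} (hd : 1 ≤ d) (R Rp : Finset (Ed d)) (κ : Ed d → ℝ)
    (hRS : IsRootSystem R Rp κ)
    (m : ℕ) (u : Fin m → Ed d × ℝ → ℝ)
    (hu : ∀ j, KHarmonicOn R Rp κ (u j) (upperHS d)) :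
    ∀ p ∈ upperHS d, isRegular R p.1 →
      0 < Real.sqrt (∑ j, u j p ^ 2) →
      0 ≤ dunklLap Rp κ (fun q => Real.sqrt (∑ j, u j q ^ 2)) p := by
  intro p hp hreg hpos
  set f : Ed d × ℝ → ℝ := fun z => Real.sqrt (∑ j, u j z ^ 2) with hf
  have hS : 0 < ∑ j, u j p ^ 2 := Real.sqrt_pos.1 hpos
  have hopen : upperHS d ∈ 𝓝 p :=
    (isOpen_lt continuous_const continuous_snd).mem_nhds hp
  have hc : ∀ j, ContDiffAt ℝ 2 (u j) p := fun j => (hu j).1.contDiffAt hopen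
  refine nonneg_of_mul_nonneg_right (?_ : 0 ≤ f p * _) hpos
  have hharm : ∑ j, u j p * dunklLap Rp κ (u j) p = 0 :=
    Finset.sum_eq_zero fun j _ => by rw [(hu j).2 p hp hreg, mul_zero]
  rw [← hharm]
  have hlap : ∑ j, u j p * lapE (u j) p ≤ f p * lapE f p := by
    simp only [lapE, mul_add, Finset.sum_add_distrib, Finset.mul_sum]
    rw [Finset.sum_comm]
    exact add_le_add (Finset.sum_le_sum fun i _ => sum_mul_pd2_le u p _ hc hS)
      (sum_mul_pd2_le u p _ hc hS)
  have hterm : ∀ α ∈ Rp, ∑ j, u j p * (κ α * (fderiv ℝ (u j) p (α, 0) / ⟪α, p.1⟫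
        - (u j p - u j (reflAt α p.1, p.2)) / ⟪α, p.1⟫ ^ 2))
      ≤ f p * (κ α * (fderiv ℝ f p (α, 0) / ⟪α, p.1⟫
        - (f p - f (reflAt α p.1, p.2)) / ⟪α, p.1⟫ ^ 2)) := by
    intro α hα
    have hκ := hRS.kappa_nonneg α (hRS.pos_sub hα)
    have h1 : f p * fderiv ℝ f p (α, 0) = ∑ j, u j p * fderiv ℝ (u j) p (α, 0) :=
      sqrt_mul_fderiv u p _ (fun j => (hc j).differentiableAt (by norm_num)) hS
    have hsq : f p ^ 2 = ∑ j, u j p ^ 2 := Real.sq_sqrt hS.le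
    have hCS : ∑ j, u j p * u j (reflAt α p.1, p.2) ≤ f p * f (reflAt α p.1, p.2) :=
      Real.sum_mul_le_sqrt_mul_sqrt _ _ _
    have e1 : ∑ j, u j p * (κ α * (fderiv ℝ (u j) p (α, 0) / ⟪α, p.1⟫
          - (u j p - u j (reflAt α p.1, p.2)) / ⟪α, p.1⟫ ^ 2))
        = κ α * ((∑ j, u j p * fderiv ℝ (u j) p (α, 0)) / ⟪α, p.1⟫
          - (∑ j, u j p ^ 2 - ∑ j, u j p * u j (reflAt α p.1, p.2)) / ⟪α, p.1⟫ ^ 2) := by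
      rw [← Finset.sum_sub_distrib, Finset.sum_div, Finset.sum_div, ← Finset.sum_sub_distrib,
        Finset.mul_sum]
      exact Finset.sum_congr rfl fun j _ => by ring
    have e2 : f p * (κ α * (fderiv ℝ f p (α, 0) / ⟪α, p.1⟫
          - (f p - f (reflAt α p.1, p.2)) / ⟪α, p.1⟫ ^ 2))
        = κ α * (f p * fderiv ℝ f p (α, 0) / ⟪α, p.1⟫
          - (f p ^ 2 - f p * f (reflAt α p.1, p.2)) / ⟪α, p.1⟫ ^ 2) := by ring
    rw [e1, e2, h1, hsq]
    gcongr
  have hsum := Finset.sum_le_sum hterm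
  rw [Finset.sum_comm] at hsum
  simp only [← Finset.mul_sum] at hsum
  simp only [dunklLap, mul_add, Finset.sum_add_distrib, mul_left_comm _ (2 : ℝ)]
  rw [← Finset.mul_sum]
  linarith

end
end

section
/- Let u_1,…,u_m be κ-harmonic functions in ℝ^{d+1}₊ and F = (u_1,…,u_m). At every point (x,y) ∈ ℝ^{d+1}₊ with x regular and |F(x,y)| > 0, one has the identity Δ_κ|F| = |F|^{-3} ∑_{i=0}^{d} (|F|² |∂_{x_i}F|² − ⟨F, ∂_{x_i}F⟩²) + 2|F|^{-1} ∑_{α∈R₊} κ(α) (|F(x,y)| |F(σ_α(x),y)| − ⟨F(x,y), F(σ_α(x),y)⟩)/⟨α,x⟩², where ∂_{x_0} = ∂_y, ∂_{x_i} (1 ≤ i ≤ d) are the partial derivatives in the x-variables, ⟨·,·⟩ is the Euclidean inner product on ℝ^m, |F| = (∑_j u_j²)^{1/2}, ∂_{x_i}F = (∂_{x_i}u_1,…,∂_{x_i}u_m). In particular both sums on the right-hand side are nonnegative. -/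
/-!
Write `N = |F| = √S` with `S = ∑ u_j²`. Near a point where `S ≠ 0`, the chain rule gives
`D_v N = (∑ u_j D_v u_j) / N`, and differentiating once more,
`D_v² N = N⁻³ (S ∑ (D_v u_j)² − (∑ u_j D_v u_j)²) + N⁻¹ ∑ u_j D_v² u_j`
(`fderiv_norm`, `pd2_norm`). Summing over the coordinate directions and adding the Dunkl part,
whose gradient terms in `Δ_κ N` and in `N⁻¹ ∑ u_j Δ_κ u_j` agree, yields
`Δ_κ N = N⁻³ ∑_i (…) + 2 N⁻¹ ∑_α (…) + N⁻¹ ∑_j u_j Δ_κ u_j` (`dunklLap_norm`). The last term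
vanishes for `κ`-harmonic `u_j`. Both remaining sums are nonnegative by Cauchy–Schwarz.
-/

open MeasureTheory Filter Metric
open scoped RealInnerProductSpace Topology

noncomputable section

theorem fderiv_norm {E : Type*} [NormedAddCommGroup E] [NormedSpace ℝ E] {m : ℕ}
    {u : Fin m → E → ℝ} {p : E} (hu : ∀ j, DifferentiableAt ℝ (u j) p)
    (hS : ∑ j, u j p ^ 2 ≠ 0) (v : E) :
    fderiv ℝ (fun q => Real.sqrt (∑ j, u j q ^ 2)) p v =
      (∑ j, u j p * fderiv ℝ (u j) p v) / Real.sqrt (∑ j, u j p ^ 2) := by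
  have h1 : HasFDerivAt (fun q => ∑ j, u j q ^ 2)
      (∑ j, (2 * u j p) • fderiv ℝ (u j) p) p := by
    refine HasFDerivAt.fun_sum fun j _ => ?_
    simpa using (hu j).hasFDerivAt.pow 2
  rw [(h1.sqrt hS).fderiv]
  simp only [smul_apply, sum_apply, smul_eq_mul,
    mul_assoc, ← Finset.mul_sum]
  have : Real.sqrt (∑ j, u j p ^ 2) ≠ 0 := by
    rw [Real.sqrt_ne_zero']
    exact lt_of_le_of_ne (Finset.sum_nonneg fun j _ => sq_nonneg _) hS.symm
  field_simp

theorem pd2_norm {d m : ℕ} {u : Fin m → Ed d × ℝ → ℝ} {p : Ed d × ℝ}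
    (hu : ∀ j, ContDiffAt ℝ 2 (u j) p) (hS : 0 < Real.sqrt (∑ j, u j p ^ 2))
    (v : Ed d × ℝ) :
    pd2 (fun q => Real.sqrt (∑ j, u j q ^ 2)) p v =
      (1 / Real.sqrt (∑ j, u j p ^ 2) ^ 3) *
        ((∑ j, u j p ^ 2) * (∑ j, (fderiv ℝ (u j) p v) ^ 2) -
          (∑ j, u j p * fderiv ℝ (u j) p v) ^ 2) +
      (1 / Real.sqrt (∑ j, u j p ^ 2)) * ∑ j, u j p * pd2 (u j) p v := by
  have hS0 : 0 < ∑ j, u j p ^ 2 := Real.sqrt_pos.mp hS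
  have hdiff : ∀ j, DifferentiableAt ℝ (u j) p := fun j => (hu j).differentiableAt (by norm_num)
  have hev : (fun q => fderiv ℝ (fun q => Real.sqrt (∑ j, u j q ^ 2)) q v) =ᶠ[𝓝 p]
      fun q => (∑ j, u j q * fderiv ℝ (u j) q v) * (Real.sqrt (∑ j, u j q ^ 2))⁻¹ := by
    have h1 : ∀ᶠ q in 𝓝 p, ∀ j, DifferentiableAt ℝ (u j) q := by
      rw [eventually_all]
      intro j
      filter_upwards [(hu j).eventually (by simp)] with q hq
      exact hq.differentiableAt (by norm_num)
    have hc : ContinuousAt (fun q => ∑ j, u j q ^ 2) p :=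
      tendsto_finsetSum _ fun j _ => ((hdiff j).continuousAt.pow 2)
    filter_upwards [h1, hc.eventually_ne hS0.ne'] with q hq hq0
    rw [fderiv_norm hq hq0, div_eq_mul_inv]
  have hD : ∀ j, DifferentiableAt ℝ (fun q => fderiv ℝ (u j) q v) p := fun j =>
    (((hu j).fderiv_right (m := 1) (by norm_num)).differentiableAt (by norm_num)).clm_apply
      (differentiableAt_const v)
  have hA : HasFDerivAt (fun q => ∑ j, u j q * fderiv ℝ (u j) q v)
      (∑ j, (u j p • fderiv ℝ (fun q => fderiv ℝ (u j) q v) p +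
        fderiv ℝ (u j) p v • fderiv ℝ (u j) p)) p :=
    HasFDerivAt.fun_sum fun j _ => (hdiff j).hasFDerivAt.mul (hD j).hasFDerivAt
  have hN : DifferentiableAt ℝ (fun q => Real.sqrt (∑ j, u j q ^ 2)) p := by
    refine DifferentiableAt.sqrt ?_ hS0.ne'
    exact DifferentiableAt.fun_sum fun j _ => (hdiff j).pow 2
  have hI := (hasDerivAt_inv hS.ne').comp_hasFDerivAt p hN.hasFDerivAt
  have hprod := hA.mul hI
  unfold pd2
  rw [hev.fderiv_eq]
  refine (congrArg (fun L : Ed d × ℝ →L[ℝ] ℝ => L v) hprod.fderiv).trans ?_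
  simp only [add_apply, smul_apply,
    sum_apply, smul_eq_mul, Finset.sum_add_distrib,
    fderiv_norm hdiff hS0.ne', Function.comp_apply, ← sq]
  have hsq := Real.sq_sqrt hS0.le
  generalize Real.sqrt (∑ j, u j p ^ 2) = N at hS hsq ⊢
  rw [← hsq]
  field_simp
  ring

/-- The identity for arbitrary `C²` functions, with the extra term `N⁻¹ ∑ u_j Δ_κ u_j`. -/
theorem dunklLap_norm {d m : ℕ} (Rp : Finset (Ed d)) (κ : Ed d → ℝ)
    {u : Fin m → Ed d × ℝ → ℝ} {p : Ed d × ℝ}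
    (hu : ∀ j, ContDiffAt ℝ 2 (u j) p) (hS : 0 < Real.sqrt (∑ j, u j p ^ 2)) :
    dunklLap Rp κ (fun q => Real.sqrt (∑ j, u j q ^ 2)) p =
      (1 / Real.sqrt (∑ j, u j p ^ 2) ^ 3) *
        ((∑ i : Fin d,
            ((∑ j, u j p ^ 2) *
                (∑ j, (fderiv ℝ (u j) p (EuclideanSpace.single i 1, 0)) ^ 2) -
              (∑ j, u j p * fderiv ℝ (u j) p (EuclideanSpace.single i 1, 0)) ^ 2)) +
          ((∑ j, u j p ^ 2) * (∑ j, (fderiv ℝ (u j) p ((0 : Ed d), 1)) ^ 2) -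
            (∑ j, u j p * fderiv ℝ (u j) p ((0 : Ed d), 1)) ^ 2)) +
      (2 / Real.sqrt (∑ j, u j p ^ 2)) * ∑ α ∈ Rp, κ α *
        ((Real.sqrt (∑ j, u j p ^ 2) *
            Real.sqrt (∑ j, u j (reflAt α p.1, p.2) ^ 2) -
          ∑ j, u j p * u j (reflAt α p.1, p.2)) / ⟪α, p.1⟫ ^ 2) +
      (1 / Real.sqrt (∑ j, u j p ^ 2)) * ∑ j, u j p * dunklLap Rp κ (u j) p := by
  have hS0 : 0 < ∑ j, u j p ^ 2 := Real.sqrt_pos.mp hS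
  have hdiff : ∀ j, DifferentiableAt ℝ (u j) p := fun j => (hu j).differentiableAt (by norm_num)
  have hlap : ∑ j, u j p * lapE (u j) p =
      ∑ i : Fin d, ∑ j, u j p * pd2 (u j) p (EuclideanSpace.single i 1, 0) +
        ∑ j, u j p * pd2 (u j) p (0, 1) := by
    simp only [lapE, mul_add, Finset.sum_add_distrib, Finset.mul_sum]
    rw [Finset.sum_comm]
  have hroot : ∑ j, u j p * (2 * ∑ α ∈ Rp, κ α *
        (fderiv ℝ (u j) p (α, 0) / ⟪α, p.1⟫ -
          (u j p - u j (reflAt α p.1, p.2)) / ⟪α, p.1⟫ ^ 2)) =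
      2 * ∑ α ∈ Rp, κ α * ((∑ j, u j p * fderiv ℝ (u j) p (α, 0)) / ⟪α, p.1⟫ -
        ((∑ j, u j p ^ 2) - ∑ j, u j p * u j (reflAt α p.1, p.2)) / ⟪α, p.1⟫ ^ 2) := by
    simp only [Finset.mul_sum]
    rw [Finset.sum_comm]
    refine Finset.sum_congr rfl fun α _ => ?_
    rw [← Finset.sum_sub_distrib, Finset.sum_div, Finset.sum_div, ← Finset.sum_sub_distrib,
      Finset.mul_sum, Finset.mul_sum]
    refine Finset.sum_congr rfl fun j _ => ?_
    ring
  have hterm : ∑ α ∈ Rp, κ α *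
        ((∑ j, u j p * fderiv ℝ (u j) p (α, 0)) / Real.sqrt (∑ j, u j p ^ 2) / ⟪α, p.1⟫ -
          (Real.sqrt (∑ j, u j p ^ 2) - Real.sqrt (∑ j, u j (reflAt α p.1, p.2) ^ 2)) /
            ⟪α, p.1⟫ ^ 2) =
      (1 / Real.sqrt (∑ j, u j p ^ 2)) * ∑ α ∈ Rp, κ α *
        ((Real.sqrt (∑ j, u j p ^ 2) *
            Real.sqrt (∑ j, u j (reflAt α p.1, p.2) ^ 2) -
          ∑ j, u j p * u j (reflAt α p.1, p.2)) / ⟪α, p.1⟫ ^ 2) +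
      (1 / Real.sqrt (∑ j, u j p ^ 2)) * ∑ α ∈ Rp, κ α *
        ((∑ j, u j p * fderiv ℝ (u j) p (α, 0)) / ⟪α, p.1⟫ -
        ((∑ j, u j p ^ 2) - ∑ j, u j p * u j (reflAt α p.1, p.2)) / ⟪α, p.1⟫ ^ 2) := by
    rw [Finset.mul_sum, Finset.mul_sum, ← Finset.sum_add_distrib]
    refine Finset.sum_congr rfl fun α _ => ?_
    have hsq := Real.sq_sqrt hS0.le
    generalize Real.sqrt (∑ j, u j p ^ 2) = N at hS hsq ⊢
    rw [← hsq]
    -- `⟪α, p.1⟫` may vanish here, so only its inverse is manipulated.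
    simp only [div_eq_mul_inv]
    generalize (⟪α, p.1⟫ ^ 2)⁻¹ = b
    generalize (⟪α, p.1⟫)⁻¹ = c
    field_simp
    ring
  have hsplit : ∑ j, u j p * dunklLap Rp κ (u j) p = ∑ j, u j p * lapE (u j) p +
      ∑ j, u j p * (2 * ∑ α ∈ Rp, κ α * (fderiv ℝ (u j) p (α, 0) / ⟪α, p.1⟫ -
          (u j p - u j (reflAt α p.1, p.2)) / ⟪α, p.1⟫ ^ 2)) := by
    simp only [dunklLap, mul_add, Finset.sum_add_distrib]
  rw [hsplit, hlap, hroot]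
  simp only [dunklLap, lapE, pd2_norm hu hS, fderiv_norm hdiff hS0.ne']
  rw [hterm, Finset.sum_add_distrib, ← Finset.mul_sum, ← Finset.mul_sum]
  ring

/-- **The identity behind Proposition 4.4.** For `κ`-harmonic `u_1, …, u_m` and
`|F| = (∑ u_j²)^{1/2}`, at every point of `ℝ^{d+1}₊` with regular `x`-coordinate where
`|F| > 0`,
`Δ_κ|F| = |F|⁻³ ∑_i (|F|²|∂_i F|² − ⟨F,∂_i F⟩²)
  + 2|F|⁻¹ ∑_{α∈R₊} κ(α)(|F||σ_α F| − ⟨F,σ_α F⟩)/⟨α,x⟩²`,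
and both sums are nonnegative. -/
theorem dunkl_lap_norm_identity
    {d : ℕ} (hd : 1 ≤ d) (R Rp : Finset (Ed d)) (κ : Ed d → ℝ)
    (hRS : IsRootSystem R Rp κ)
    (m : ℕ) (u : Fin m → Ed d × ℝ → ℝ)
    (hu : ∀ j, KHarmonicOn R Rp κ (u j) (upperHS d)) :
    ∀ p ∈ upperHS d, isRegular R p.1 →
      0 < Real.sqrt (∑ j, u j p ^ 2) →
      (dunklLap Rp κ (fun q => Real.sqrt (∑ j, u j q ^ 2)) p =
          (1 / Real.sqrt (∑ j, u j p ^ 2) ^ 3) *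
            ((∑ i : Fin d,
                ((∑ j, u j p ^ 2) *
                    (∑ j, (fderiv ℝ (u j) p (EuclideanSpace.single i 1, 0)) ^ 2) -
                  (∑ j, u j p * fderiv ℝ (u j) p (EuclideanSpace.single i 1, 0)) ^ 2)) +
              ((∑ j, u j p ^ 2) * (∑ j, (fderiv ℝ (u j) p ((0 : Ed d), 1)) ^ 2) -
                (∑ j, u j p * fderiv ℝ (u j) p ((0 : Ed d), 1)) ^ 2)) +
          (2 / Real.sqrt (∑ j, u j p ^ 2)) * ∑ α ∈ Rp, κ α *
            ((Real.sqrt (∑ j, u j p ^ 2) *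
                Real.sqrt (∑ j, u j (reflAt α p.1, p.2) ^ 2) -
              ∑ j, u j p * u j (reflAt α p.1, p.2)) / ⟪α, p.1⟫ ^ 2)) ∧
      (0 ≤ (∑ i : Fin d,
              ((∑ j, u j p ^ 2) *
                  (∑ j, (fderiv ℝ (u j) p (EuclideanSpace.single i 1, 0)) ^ 2) -
                (∑ j, u j p * fderiv ℝ (u j) p (EuclideanSpace.single i 1, 0)) ^ 2)) +
            ((∑ j, u j p ^ 2) * (∑ j, (fderiv ℝ (u j) p ((0 : Ed d), 1)) ^ 2) -
              (∑ j, u j p * fderiv ℝ (u j) p ((0 : Ed d), 1)) ^ 2)) ∧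
      (0 ≤ ∑ α ∈ Rp, κ α *
            ((Real.sqrt (∑ j, u j p ^ 2) *
                Real.sqrt (∑ j, u j (reflAt α p.1, p.2) ^ 2) -
              ∑ j, u j p * u j (reflAt α p.1, p.2)) / ⟪α, p.1⟫ ^ 2)) := by
  intro p hp hreg hS
  have hopen : IsOpen (upperHS d) := isOpen_lt continuous_const continuous_snd
  have hC : ∀ j, ContDiffAt ℝ 2 (u j) p := fun j => (hu j).1.contDiffAt (hopen.mem_nhds hp)
  refine ⟨?_, ?_, ?_⟩
  · have hzero : ∑ j, u j p * dunklLap Rp κ (u j) p = 0 :=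
      Finset.sum_eq_zero fun j _ => by rw [(hu j).2 p hp hreg, mul_zero]
    rw [dunklLap_norm Rp κ hC hS, hzero, mul_zero, add_zero]
  · exact add_nonneg
      (Finset.sum_nonneg fun i _ => sub_nonneg.mpr (Finset.sum_mul_sq_le_sq_mul_sq _ _ _))
      (sub_nonneg.mpr (Finset.sum_mul_sq_le_sq_mul_sq _ _ _))
  · refine Finset.sum_nonneg fun α hα =>
      mul_nonneg (hRS.kappa_nonneg α (hRS.pos_sub hα)) (div_nonneg ?_ (sq_nonneg _))
    exact sub_nonneg.mpr (Real.sum_mul_le_sqrt_mul_sqrt _ _ _)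

end
end

section
/- Let E be a G-invariant compact subset of ℝ^d and u a κ-harmonic function in ℝ^{d+1}₊. If, for some a > 0, |u(x,y)| ≤ 1 for all (x,y) ∈ ∪_{x⁰∈E} Γ_a^2(x⁰), then for almost every x ∈ E, u(t,y) converges to a finite limit as (t,y) ∈ Γ_a(x) tends to (x,0). -/
/-!
The proof reduces the Dunkl Laplacian to the Euclidean one and then runs Calderón's argument.

*Reduction.* Almost every point is regular. Near a regular point the weight
`W(x) = ∏ |⟨α, x⟩| ^ κ(α)` is smooth and positive, and multiplication by `W` removes the first
order term of `Δ_κ`: for `v = W u`, `Δ v` is the sum of `u Δ W` and of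
`2 W ∑ κ(α) (u(x, y) - u(σ_α x, y)) / ⟨α, x⟩²` (`lapE_dWeight_mul`). Since `E` is `G`-invariant,
`u ∘ σ_α` is bounded by `1` on the union of the cones as well, so `v` and `Δ v` are both bounded on
the part of that union lying over a small ball. Limits of `v` are limits of `u` multiplied by `W`.

*Local theorem* (`sawtooth_limit`). Let `F` be compact and let `v` and `Δ v` be bounded on the
sawtooth region `{dist(t, F) < a y, 0 < y < 2 h}`. For `ε > 0` the function `v(·, · + ε)` is
compared with the normalized Poisson integral of its own values at height `ε`. The difference is
dominated by `C₁ (T - P χ_F) + C₂ y`, where `T` is the mass of the Poisson kernel: the first term is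
bounded below on the lateral boundary (`pint_indicator_le_lateral`), the second dominates at the
top, and a term `(M + 1) y²` absorbs the Laplacian of `v`, so that the maximum principle
(`sawtooth_max_principle`) applies (`sawtooth_compare`). Letting `ε → 0` along an ultrafilter for
which the boundary values converge weakly to some bounded `ψ` (`exists_weak_limit`) gives
`|v - T⁻¹ P ψ| ≤ C₁ (T - P χ_F) + C₂ y`. By the nontangential Fatou theorem for Poisson integrals of
bounded functions (`pint_nt_limit`) the right side tends to `0` and `T⁻¹ P ψ` tends to `ψ(x)` within
the cone, for almost every `x ∈ F`.
-/

open MeasureTheory Filter Metric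
open scoped RealInnerProductSpace Topology

noncomputable section

/-! ### The Poisson kernel of the half-space -/

/-- The (unnormalized) Poisson kernel `y (|z|² + y²)^{-(d+1)/2}` of the upper half-space. -/
def pk {d : ℕ} (z : Ed d) (y : ℝ) : ℝ := y * (‖z‖ ^ 2 + y ^ 2) ^ (-((d : ℝ) + 1) / 2)

/-- The (unnormalized) Poisson integral of `φ`. -/
def pint {d : ℕ} (φ : Ed d → ℝ) (p : Ed d × ℝ) : ℝ := ∫ z, pk (p.1 - z) p.2 * φ z

/-- The total mass of the Poisson kernel at height `1` (hence at every height). -/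
def pmass (d : ℕ) : ℝ := ∫ z : Ed d, pk z 1

lemma pk_nonneg {d : ℕ} (z : Ed d) {y : ℝ} (hy : 0 ≤ y) : 0 ≤ pk z y := by
  unfold pk; positivity

lemma pk_pos {d : ℕ} (z : Ed d) {y : ℝ} (hy : 0 < y) : 0 < pk z y := by
  unfold pk; positivity

lemma pk_one_le {d : ℕ} (z : Ed d) : pk z 1 ≤ 1 := by
  unfold pk
  rw [one_mul]
  apply Real.rpow_le_one_of_one_le_of_nonpos
  · nlinarith [sq_nonneg ‖z‖]
  · have : (0 : ℝ) ≤ d := by positivity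
    linarith

lemma pk_neg {d : ℕ} (z : Ed d) (y : ℝ) : pk (-z) y = pk z y := by
  unfold pk; rw [norm_neg]

lemma pk_continuousAt {d : ℕ} (q : Ed d × ℝ) (hq : 0 < q.2) :
    ContinuousAt (fun q : Ed d × ℝ => pk q.1 q.2) q := by
  unfold pk
  refine continuousAt_snd.mul (ContinuousAt.rpow_const (by fun_prop) (Or.inl ?_))
  positivity

lemma pk_continuous {d : ℕ} {y : ℝ} (hy : 0 < y) : Continuous (fun z : Ed d => pk z y) := by
  refine continuous_iff_continuousAt.2 fun z => ?_
  exact (pk_continuousAt (z, y) hy).comp (f := fun z : Ed d => (z, y)) (by fun_prop)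

lemma pk_integrable (d : ℕ) : Integrable (fun z : Ed d => pk z 1) := by
  have h := integrable_rpow_neg_one_add_norm_sq (E := Ed d) (μ := volume) (r := (d : ℝ) + 1)
    (by simp)
  refine h.congr (Eventually.of_forall fun z => ?_)
  simp only [pk, one_mul, one_pow]
  rw [add_comm]

lemma pk_smul {d : ℕ} (z : Ed d) {y : ℝ} (hy : 0 < y) :
    pk (y • z) y = (y ^ d)⁻¹ * pk z 1 := by
  unfold pk
  have h1 : ‖y • z‖ ^ 2 + y ^ 2 = y ^ 2 * (‖z‖ ^ 2 + 1 ^ 2) := by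
    rw [norm_smul, Real.norm_eq_abs, mul_pow, sq_abs]; ring
  rw [h1, Real.mul_rpow (by positivity) (by positivity)]
  have h2 : (y ^ 2) ^ (-((d : ℝ) + 1) / 2) = (y ^ d)⁻¹ * y⁻¹ := by
    rw [← Real.rpow_natCast y 2, ← Real.rpow_mul hy.le]
    have : ((2 : ℕ) : ℝ) * (-((d : ℝ) + 1) / 2) = -((d + 1 : ℕ) : ℝ) := by push_cast; ring
    rw [this, Real.rpow_neg hy.le, Real.rpow_natCast, pow_succ, mul_inv]
  rw [h2]
  field_simp

/-- The Poisson integral at height `y` as an average of dilates at scale `y`. -/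
lemma pint_eq_dilate {d : ℕ} (φ : Ed d → ℝ) (t : Ed d) {y : ℝ} (hy : 0 < y) :
    pint φ (t, y) = ∫ z, pk z 1 * φ (t - y • z) := by
  have h1 : pint φ (t, y) = ∫ z, pk z y * φ (t - z) := by
    rw [pint, ← integral_sub_left_eq_self _ volume t]
    simp
  have h2 := Measure.integral_comp_smul (volume : Measure (Ed d))
    (fun z => pk z y * φ (t - z)) y
  rw [h1]
  simp only [finrank_euclideanSpace, Fintype.card_fin, smul_eq_mul] at h2
  have hyd : 0 < y ^ d := by positivity
  rw [abs_of_pos (by positivity)] at h2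
  have h3 : ∫ z, pk z y * φ (t - z) = y ^ d * ∫ z, pk (y • z) y * φ (t - y • z) := by
    rw [h2]; field_simp
  rw [h3, ← integral_const_mul]
  congr 1; ext z
  rw [pk_smul z hy]; field_simp

/-- The Poisson integral at `(x + y s, y)`, recentred at `x`. -/
lemma pint_eq_recentred {d : ℕ} (φ : Ed d → ℝ) (x s : Ed d) {y : ℝ} (hy : 0 < y) :
    pint φ (x + y • s, y) = ∫ w, pk (s - w) 1 * φ (x + y • w) := by
  rw [pint_eq_dilate φ _ hy, ← integral_sub_left_eq_self _ volume s]
  congr 1; ext w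
  congr 2
  rw [smul_sub]; abel

lemma pk_shift_integrable {d : ℕ} (s : Ed d) : Integrable (fun w : Ed d => pk (s - w) 1) :=
  (pk_integrable d).comp_sub_left s

lemma pmass_pos (d : ℕ) : 0 < pmass d := by
  unfold pmass
  rw [integral_pos_iff_support_of_nonneg (fun z => pk_nonneg z zero_le_one) (pk_integrable d)]
  have : Function.support (fun z : Ed d => pk z 1) = Set.univ := by
    ext z; simp [(pk_pos z one_pos).ne']
  rw [this]
  exact NeZero.pos _

lemma pmass_shift {d : ℕ} (s : Ed d) : ∫ w : Ed d, pk (s - w) 1 = pmass d :=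
  integral_sub_left_eq_self (fun z : Ed d => pk z 1) volume s

lemma pk_mul_integrable {d : ℕ} {φ : Ed d → ℝ} (hφ : Measurable φ) {M : ℝ}
    (hM : ∀ z, |φ z| ≤ M) (t : Ed d) (y : ℝ) :
    Integrable (fun z : Ed d => pk z 1 * φ (t - y • z)) := by
  refine ((pk_integrable d).mul_const M).mono' ?_ (Eventually.of_forall fun z => ?_)
  · exact ((pk_continuous one_pos).measurable.mul (by fun_prop)).aestronglyMeasurable
  · rw [norm_mul, Real.norm_eq_abs, Real.norm_eq_abs, abs_of_nonneg (pk_nonneg z zero_le_one)]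
    exact mul_le_mul_of_nonneg_left (hM _) (pk_nonneg z zero_le_one)

lemma pint_abs_le {d : ℕ} {φ : Ed d → ℝ} {M : ℝ}
    (hM : ∀ z, |φ z| ≤ M) (p : Ed d × ℝ) (hp : 0 < p.2) : |pint φ p| ≤ pmass d * M := by
  obtain ⟨t, y⟩ := p
  rw [pint_eq_dilate φ t hp, pmass, ← integral_mul_const, ← Real.norm_eq_abs]
  refine norm_integral_le_of_norm_le ((pk_integrable d).mul_const M)
    (Eventually.of_forall fun z => ?_)
  rw [norm_mul, Real.norm_eq_abs, Real.norm_eq_abs, abs_of_nonneg (pk_nonneg z zero_le_one)]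
  exact mul_le_mul_of_nonneg_left (hM _) (pk_nonneg z zero_le_one)

/-- Poisson integrals attain continuous boundary values. -/
lemma pint_tendsto_of_continuousAt {d : ℕ} {φ : Ed d → ℝ} (hφ : Measurable φ) {M : ℝ}
    (hM : ∀ z, |φ z| ≤ M) {t₀ : Ed d} (hc : ContinuousAt φ t₀) :
    Tendsto (pint φ) (𝓝[{p | 0 < p.2}] (t₀, (0 : ℝ))) (𝓝 (pmass d * φ t₀)) := by
  have h : Tendsto (fun p : Ed d × ℝ => ∫ z, pk z 1 * φ (p.1 - p.2 • z))
      (𝓝[{p | 0 < p.2}] (t₀, (0 : ℝ))) (𝓝 (∫ z : Ed d, pk z 1 * φ t₀)) := by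
    refine tendsto_integral_filter_of_dominated_convergence (fun z => pk z 1 * M)
      (Eventually.of_forall fun p => (pk_mul_integrable hφ hM _ _).aestronglyMeasurable)
      (Eventually.of_forall fun p => Eventually.of_forall fun z => ?_)
      ((pk_integrable d).mul_const M) (Eventually.of_forall fun z => ?_)
    · rw [norm_mul, Real.norm_eq_abs, Real.norm_eq_abs, abs_of_nonneg (pk_nonneg z zero_le_one)]
      exact mul_le_mul_of_nonneg_left (hM _) (pk_nonneg z zero_le_one)
    · refine Tendsto.const_mul _ ?_
      have h1 : Tendsto (fun p : Ed d × ℝ => p.1 - p.2 • z) (𝓝 (t₀, (0 : ℝ))) (𝓝 t₀) := by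
        have : ContinuousAt (fun p : Ed d × ℝ => p.1 - p.2 • z) (t₀, (0 : ℝ)) := by fun_prop
        simpa [ContinuousAt] using this
      exact (hc.tendsto.comp h1).mono_left nhdsWithin_le_nhds
  rw [integral_mul_const] at h
  refine h.congr' ?_
  filter_upwards [self_mem_nhdsWithin] with p hp
  exact (pint_eq_dilate φ p.1 hp).symm

lemma pk_tail_small (d : ℕ) {ε : ℝ} (hε : 0 < ε) :
    ∃ N : ℕ, ∫ z in (ball (0 : Ed d) N)ᶜ, pk z 1 < ε := by
  have h := tendsto_setIntegral_of_antitone (μ := (volume : Measure (Ed d)))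
    (s := fun n : ℕ => (ball (0 : Ed d) n)ᶜ) (f := fun z => pk z 1)
    (fun n => measurableSet_ball.compl)
    (fun m n hmn => Set.compl_subset_compl.2 (ball_subset_ball (by exact_mod_cast hmn)))
    ⟨0, (pk_integrable d).integrableOn⟩
  have h0 : (⋂ n : ℕ, (ball (0 : Ed d) n)ᶜ) = ∅ := by
    rw [← Set.compl_iUnion, iUnion_ball_nat, Set.compl_univ]
  rw [h0] at h
  simp only [Measure.restrict_empty, integral_zero_measure] at h
  exact (h.eventually (gt_mem_nhds hε)).exists

/-! ### Nontangential limits of Poisson integrals -/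

/-- The mean oscillation of `φ` over the ball of radius `y N`, rescaled to the ball of radius `N`. -/
lemma rescaled_osc {d : ℕ} (φ : Ed d → ℝ) (x : Ed d) {y N : ℝ} (hy : 0 < y) (hN : 0 < N) :
    ∫ w in closedBall (0 : Ed d) N, |φ (x + y • w) - φ x| =
      N ^ d * volume.real (ball (0 : Ed d) 1) *
        ⨍ z in closedBall x (N * y), ‖φ z - φ x‖ := by
  set f : Ed d → ℝ := (closedBall x (N * y)).indicator (fun z => ‖φ z - φ x‖) with hf
  have h1 : ∫ w in closedBall (0 : Ed d) N, |φ (x + y • w) - φ x| = ∫ w, f (x + y • w) := by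
    rw [← integral_indicator measurableSet_closedBall]
    congr 1; ext w
    have : x + y • w ∈ closedBall x (N * y) ↔ w ∈ closedBall (0 : Ed d) N := by
      simp only [mem_closedBall, dist_self_add_left, dist_zero_right, norm_smul,
        Real.norm_eq_abs, abs_of_pos hy]
      rw [mul_comm N, mul_le_mul_iff_right₀ hy]
    by_cases hw : w ∈ closedBall (0 : Ed d) N
    · rw [Set.indicator_of_mem hw, hf, Set.indicator_of_mem (this.2 hw), Real.norm_eq_abs]
    · rw [Set.indicator_of_notMem hw, hf, Set.indicator_of_notMem (fun h => hw (this.1 h))]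
  have h2 := Measure.integral_comp_smul (volume : Measure (Ed d)) (fun z => f (x + z)) y
  simp only [finrank_euclideanSpace, Fintype.card_fin, smul_eq_mul] at h2
  rw [integral_add_left_eq_self f x] at h2
  rw [h1, h2, hf, integral_indicator measurableSet_closedBall, setAverage_eq,
    Measure.addHaar_real_closedBall _ _ (by positivity), smul_eq_mul,
    abs_of_pos (by positivity)]
  simp only [finrank_euclideanSpace, Fintype.card_fin]
  have hb : 0 < volume.real (ball (0 : Ed d) 1) :=
    ENNReal.toReal_pos (measure_ball_pos _ _ one_pos).ne' measure_ball_lt_top.ne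
  rw [mul_pow]
  field_simp

/-- Fatou's theorem for Poisson integrals of bounded functions: at a.e. point they have the
expected limit through the cone of aperture `a`. -/
lemma pint_nt_limit {d : ℕ} {φ : Ed d → ℝ} (hφ : Measurable φ) {M : ℝ}
    (hM : ∀ z, |φ z| ≤ M) (a : ℝ) :
    ∀ᵐ x : Ed d, Tendsto (pint φ) (𝓝[cone a x] (x, (0 : ℝ))) (𝓝 (pmass d * φ x)) := by
  have hloc : LocallyIntegrable φ volume :=
    (locallyIntegrable_const M).mono hφ.aestronglyMeasurable
      (Eventually.of_forall fun z => (hM z).trans (le_abs_self M))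
  have hL := IsUnifLocDoublingMeasure.ae_tendsto_average_norm_sub
    (volume : Measure (Ed d)) hloc 1
  filter_upwards [hL] with x hx
  have hM0 : 0 ≤ M := (abs_nonneg _).trans (hM x)
  rw [Metric.tendsto_nhds]
  intro ε hε
  obtain ⟨N₀, hN₀⟩ := pk_tail_small d (ε := ε / (4 * (M + 1))) (by positivity)
  -- A point `(x + y s, y)` of the cone has `|s| < a`, so the tail `|w| > N₀ + |a| + 1`
  -- of the kernel centred at `s` is controlled by the tail beyond `N₀` of the centred kernel.
  set N : ℝ := N₀ + |a| + 1 with hN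
  have hNpos : 0 < N := by positivity
  have hosc : Tendsto (fun y : ℝ => ∫ w in closedBall (0 : Ed d) N, |φ (x + y • w) - φ x|)
      (𝓝[>] 0) (𝓝 0) := by
    have h1 := hx (l := 𝓝[>] (0 : ℝ)) (fun _ => x) (fun y => N * y) ?_ ?_
    · have h2 := h1.const_mul (N ^ d * volume.real (ball (0 : Ed d) 1))
      rw [mul_zero] at h2
      refine h2.congr' ?_
      filter_upwards [self_mem_nhdsWithin] with y hy
      exact (rescaled_osc φ x hy hNpos).symm
    · refine tendsto_nhdsWithin_iff.2 ⟨?_, ?_⟩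
      · have : Tendsto (fun y : ℝ => N * y) (𝓝 0) (𝓝 (N * 0)) := by
          exact (continuous_const.mul continuous_id).tendsto 0
        rw [mul_zero] at this
        exact this.mono_left nhdsWithin_le_nhds
      · filter_upwards [self_mem_nhdsWithin] with y hy
        exact mul_pos hNpos hy
    · filter_upwards [self_mem_nhdsWithin] with y hy
      simp only [one_mul]
      exact mem_closedBall_self (mul_pos hNpos hy).le
  have hsnd : Tendsto (fun p : Ed d × ℝ => p.2) (𝓝[cone a x] (x, (0 : ℝ))) (𝓝[>] 0) := by
    refine tendsto_nhdsWithin_iff.2 ⟨?_, ?_⟩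
    · exact (continuous_snd.tendsto (x, (0 : ℝ))).mono_left nhdsWithin_le_nhds
    · filter_upwards [self_mem_nhdsWithin] with p hp using hp.1
  have hev := (hosc.comp hsnd).eventually (gt_mem_nhds (half_pos hε))
  filter_upwards [hev, self_mem_nhdsWithin] with p hp1 hp
  obtain ⟨t, y⟩ := p
  obtain ⟨hy, hty⟩ := hp
  simp only [Function.comp] at hp1 hy hty
  set s : Ed d := y⁻¹ • (t - x) with hs
  have ht : t = x + y • s := by rw [hs, smul_inv_smul₀ hy.ne']; abel
  have hsa : ‖s‖ < |a| := by
    rw [hs, norm_smul, norm_inv, Real.norm_eq_abs, abs_of_pos hy, ← dist_eq_norm]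
    rw [inv_mul_lt_iff₀ hy]
    calc dist t x < a * y := hty
      _ ≤ |a| * y := by gcongr; exact le_abs_self a
      _ = y * |a| := mul_comm _ _
  have hk := pk_shift_integrable s
  have hmeas : Measurable (fun w : Ed d => φ (x + y • w)) := by fun_prop
  have hI1 : Integrable (fun w : Ed d => pk (s - w) 1 * φ (x + y • w)) := by
    refine (hk.mul_const M).mono' (hk.aestronglyMeasurable.mul hmeas.aestronglyMeasurable)
      (Eventually.of_forall fun w => ?_)
    rw [norm_mul, Real.norm_eq_abs, Real.norm_eq_abs, abs_of_nonneg (pk_nonneg _ zero_le_one)]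
    exact mul_le_mul_of_nonneg_left (hM _) (pk_nonneg _ zero_le_one)
  have hI2 : Integrable (fun w : Ed d => pk (s - w) 1 * |φ (x + y • w) - φ x|) := by
    refine (hI1.sub (hk.mul_const (φ x))).norm.congr (Eventually.of_forall fun w => ?_)
    simp only [Pi.sub_apply]
    rw [← mul_sub, norm_mul, Real.norm_eq_abs, Real.norm_eq_abs,
      abs_of_nonneg (pk_nonneg _ zero_le_one)]
  have hosc_le : ∀ w : Ed d, |φ (x + y • w) - φ x| ≤ 2 * M := fun w => by
    calc |φ (x + y • w) - φ x| ≤ |φ (x + y • w)| + |φ x| := abs_sub _ _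
      _ ≤ 2 * M := by linarith [hM (x + y • w), hM x]
  have hmain : |pint φ (t, y) - pmass d * φ x| ≤
      ∫ w, pk (s - w) 1 * |φ (x + y • w) - φ x| := by
    rw [ht, pint_eq_recentred φ x s hy, ← pmass_shift s, ← integral_mul_const,
      ← integral_sub hI1 (hk.mul_const _), ← Real.norm_eq_abs]
    refine norm_integral_le_of_norm_le hI2 (Eventually.of_forall fun w => ?_)
    rw [← mul_sub, norm_mul, Real.norm_eq_abs, Real.norm_eq_abs,
      abs_of_nonneg (pk_nonneg _ zero_le_one)]
  rw [← integral_add_compl (measurableSet_closedBall (x := (0 : Ed d)) (ε := N)) hI2] at hmain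
  have hnear : ∫ w in closedBall (0 : Ed d) N, pk (s - w) 1 * |φ (x + y • w) - φ x| ≤
      ∫ w in closedBall (0 : Ed d) N, |φ (x + y • w) - φ x| := by
    refine setIntegral_mono_on hI2.integrableOn ?_ measurableSet_closedBall fun w _ => ?_
    · refine IntegrableOn.of_bound measure_closedBall_lt_top
        (by exact (hmeas.sub_const _).abs.aestronglyMeasurable) (2 * M)
        (Eventually.of_forall fun w => ?_)
      rw [Real.norm_eq_abs, abs_abs]; exact hosc_le w
    · exact mul_le_of_le_one_left (abs_nonneg _) (pk_one_le _)
  have hfar : ∫ w in (closedBall (0 : Ed d) N)ᶜ, pk (s - w) 1 * |φ (x + y • w) - φ x| ≤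
      (∫ z in (ball (0 : Ed d) N₀)ᶜ, pk z 1) * (2 * M) := by
    calc ∫ w in (closedBall (0 : Ed d) N)ᶜ, pk (s - w) 1 * |φ (x + y • w) - φ x|
        ≤ ∫ w in (closedBall (0 : Ed d) N)ᶜ, pk (s - w) 1 * (2 * M) := by
          refine setIntegral_mono hI2.integrableOn (hk.mul_const _).integrableOn fun w => ?_
          exact mul_le_mul_of_nonneg_left (hosc_le w) (pk_nonneg _ zero_le_one)
      _ = (∫ w in (closedBall (0 : Ed d) N)ᶜ, pk (s - w) 1) * (2 * M) :=
          integral_mul_const _ _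
      _ ≤ (∫ z in (ball (0 : Ed d) N₀)ᶜ, pk z 1) * (2 * M) := by
          gcongr
          rw [← integral_indicator measurableSet_ball.compl,
            ← integral_indicator measurableSet_closedBall.compl,
            ← integral_sub_left_eq_self
              ((ball (0 : Ed d) N₀)ᶜ.indicator fun z => pk z 1) volume s]
          refine integral_mono (hk.indicator measurableSet_closedBall.compl)
            (((pk_integrable d).indicator measurableSet_ball.compl).comp_sub_left s) fun w => ?_
          by_cases hw : w ∈ (closedBall (0 : Ed d) N)ᶜ
          · have hw' : s - w ∈ (ball (0 : Ed d) N₀)ᶜ := by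
              simp only [Set.mem_compl_iff, mem_closedBall, dist_zero_right, not_le,
                mem_ball, not_lt] at hw ⊢
              have := norm_sub_norm_le w s
              rw [norm_sub_rev] at this
              have h0 : (N₀ : ℝ) + |a| + 1 < ‖w‖ := hw
              linarith
            simp only [Set.indicator_of_mem hw, Set.indicator_of_mem hw', le_refl]
          · rw [Set.indicator_of_notMem hw]
            exact Set.indicator_nonneg (fun z _ => pk_nonneg z zero_le_one) _
  have htail : (∫ z in (ball (0 : Ed d) N₀)ᶜ, pk z 1) * (2 * M) ≤ ε / 2 := by
    calc (∫ z in (ball (0 : Ed d) N₀)ᶜ, pk z 1) * (2 * M)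
        ≤ (ε / (4 * (M + 1))) * (2 * (M + 1)) := by gcongr; linarith
      _ = ε / 2 := by field_simp; ring
  rw [Real.dist_eq]
  linarith

/-! ### Second derivatives along lines and the Laplacian -/

/-- `f` is differentiable along the line `p + s e` near `s = 0`, and the derivative has itself the
derivative `c` at `s = 0`. -/
def HasD2 {d : ℕ} (f : Ed d × ℝ → ℝ) (p e : Ed d × ℝ) (c : ℝ) : Prop :=
  ∃ g : ℝ → ℝ, (∀ᶠ s in 𝓝 (0 : ℝ), HasDerivAt (fun s : ℝ => f (p + s • e)) (g s) s) ∧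
    HasDerivAt g c 0

/-- The second derivatives of `f` at `p` along the coordinate axes of `ℝ^d × ℝ` exist and add up
to `L`. -/
def HasLap {d : ℕ} (f : Ed d × ℝ → ℝ) (p : Ed d × ℝ) (L : ℝ) : Prop :=
  ∃ (c : Fin d → ℝ) (c₀ : ℝ), (∀ i, HasD2 f p (EuclideanSpace.single i 1, 0) (c i)) ∧
    HasD2 f p (0, 1) c₀ ∧ ∑ i, c i + c₀ = L

lemma HasD2.add {d : ℕ} {f g : Ed d × ℝ → ℝ} {p e : Ed d × ℝ} {b c : ℝ}
    (hf : HasD2 f p e b) (hg : HasD2 g p e c) : HasD2 (fun q => f q + g q) p e (b + c) := by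
  obtain ⟨f', hf', hf2⟩ := hf
  obtain ⟨g', hg', hg2⟩ := hg
  refine ⟨fun s => f' s + g' s, ?_, hf2.add hg2⟩
  filter_upwards [hf', hg'] with s h1 h2 using h1.add h2

lemma HasD2.const_mul {d : ℕ} {f : Ed d × ℝ → ℝ} {p e : Ed d × ℝ} {b : ℝ}
    (hf : HasD2 f p e b) (k : ℝ) : HasD2 (fun q => k * f q) p e (k * b) := by
  obtain ⟨f', hf', hf2⟩ := hf
  refine ⟨fun s => k * f' s, ?_, hf2.const_mul k⟩
  filter_upwards [hf'] with s h1 using h1.const_mul k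

lemma HasLap.add {d : ℕ} {f g : Ed d × ℝ → ℝ} {p : Ed d × ℝ} {b c : ℝ}
    (hf : HasLap f p b) (hg : HasLap g p c) : HasLap (fun q => f q + g q) p (b + c) := by
  obtain ⟨f', f₀, hf1, hf2, rfl⟩ := hf
  obtain ⟨g', g₀, hg1, hg2, rfl⟩ := hg
  refine ⟨fun i => f' i + g' i, f₀ + g₀, fun i => (hf1 i).add (hg1 i), hf2.add hg2, ?_⟩
  rw [Finset.sum_add_distrib]; ring

lemma HasLap.const_mul {d : ℕ} {f : Ed d × ℝ → ℝ} {p : Ed d × ℝ} {b : ℝ}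
    (hf : HasLap f p b) (k : ℝ) : HasLap (fun q => k * f q) p (k * b) := by
  obtain ⟨f', f₀, hf1, hf2, rfl⟩ := hf
  refine ⟨fun i => k * f' i, k * f₀, fun i => (hf1 i).const_mul k, hf2.const_mul k, ?_⟩
  rw [← Finset.mul_sum]; ring

/-- A quadratic polynomial in the height has constant Laplacian. -/
lemma hasLap_height {d : ℕ} (p : Ed d × ℝ) (A B C : ℝ) :
    HasLap (fun q : Ed d × ℝ => A + B * q.2 + C * q.2 ^ 2) p (2 * C) := by
  refine ⟨fun _ => 0, 2 * C, fun i => ?_, ?_, by simp⟩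
  · refine ⟨fun _ => 0, Eventually.of_forall fun s => ?_, hasDerivAt_const _ _⟩
    exact (hasDerivAt_const s (A + B * p.2 + C * p.2 ^ 2)).congr_of_eventuallyEq
      (Eventually.of_forall fun s' => by simp)
  · refine ⟨fun s => B + C * (2 * (p.2 + s)), Eventually.of_forall fun s => ?_, ?_⟩
    · have h : HasDerivAt (fun s : ℝ => p.2 + s) 1 s := (hasDerivAt_id s).const_add _
      have h2 := ((h.const_mul B).const_add A).add ((h.pow 2).const_mul C)
      simp only [Prod.snd_add, Prod.smul_snd, smul_eq_mul, mul_one]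
      convert! h2 using 1
      simp
    · have h : HasDerivAt (fun s : ℝ => p.2 + s) 1 0 := (hasDerivAt_id (0 : ℝ)).const_add _
      convert! ((h.const_mul 2).const_mul C).const_add B using 1
      ring

/-- Second derivative test at a local maximum. -/
lemma HasD2.nonpos_of_isLocalMax {d : ℕ} {f : Ed d × ℝ → ℝ} {p e : Ed d × ℝ} {c : ℝ}
    (hf : HasD2 f p e c) (hmax : IsLocalMax f p) : c ≤ 0 := by
  obtain ⟨g, hg, hc⟩ := hf
  by_contra! hpos
  set F : ℝ → ℝ := fun s => f (p + s • e) with hF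
  have hline : ContinuousAt (fun s : ℝ => p + s • e) 0 := by fun_prop
  have hmaxF : IsLocalMax F 0 := by
    have h1 : Tendsto (fun s : ℝ => p + s • e) (𝓝 0) (𝓝 p) := by
      simpa [ContinuousAt] using hline
    have := h1.eventually hmax
    filter_upwards [this] with s hs
    simpa [hF] using hs
  have hderiv : deriv F =ᶠ[𝓝 0] g := hg.mono fun s hs => hs.deriv
  have hF0 : deriv F 0 = 0 := hmaxF.deriv_eq_zero
  have hF2 : deriv (deriv F) 0 = c := by rw [hderiv.deriv_eq, hc.deriv]
  have hmin : IsLocalMin F 0 := isLocalMin_of_deriv_deriv_pos (by rw [hF2]; exact hpos) hF0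
    hg.self_of_nhds.continuousAt
  -- A local maximum that is also a local minimum makes `F` locally constant.
  have hconst : F =ᶠ[𝓝 0] fun _ => F 0 := by
    filter_upwards [hmaxF, hmin] with s h1 h2 using le_antisymm h1 h2
  have h0 : deriv (deriv F) 0 = 0 := by
    rw [hconst.deriv.deriv_eq]; simp
  linarith

lemma HasLap.nonpos_of_isLocalMax {d : ℕ} {f : Ed d × ℝ → ℝ} {p : Ed d × ℝ} {L : ℝ}
    (hf : HasLap f p L) (hmax : IsLocalMax f p) : L ≤ 0 := by
  obtain ⟨c, c₀, h1, h2, rfl⟩ := hf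
  have : ∑ i, c i ≤ 0 := Finset.sum_nonpos fun i _ => (h1 i).nonpos_of_isLocalMax hmax
  linarith [h2.nonpos_of_isLocalMax hmax]

lemma hasD2_of_contDiffAt {d : ℕ} {f : Ed d × ℝ → ℝ} {p : Ed d × ℝ} (hf : ContDiffAt ℝ 2 f p)
    (e : Ed d × ℝ) : HasD2 f p e (pd2 f p e) := by
  have hline : ∀ s : ℝ, HasDerivAt (fun s : ℝ => p + s • e) e s := fun s => by
    simpa using ((hasDerivAt_id s).smul_const e).const_add p
  have hl0 : Tendsto (fun s : ℝ => p + s • e) (𝓝 0) (𝓝 p) := by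
    simpa [ContinuousAt] using (hline 0).continuousAt
  refine ⟨fun s => fderiv ℝ f (p + s • e) e, ?_, ?_⟩
  · have h1 : ∀ᶠ q in 𝓝 p, DifferentiableAt ℝ f q := by
      filter_upwards [hf.eventually (by simp)] with q hq
      exact hq.differentiableAt (by norm_num)
    filter_upwards [hl0.eventually h1] with s hs
    exact hs.hasFDerivAt.comp_hasDerivAt s (hline s)
  · have h1 : DifferentiableAt ℝ (fderiv ℝ f) p :=
      (hf.fderiv_right (m := 1) (by norm_num)).differentiableAt (by norm_num)
    have h2 : DifferentiableAt ℝ (fun q => fderiv ℝ f q e) p := h1.clm_apply (by fun_prop)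
    have h3 : HasFDerivAt (fun q => fderiv ℝ f q e) (fderiv ℝ (fun q => fderiv ℝ f q e) p)
        (p + (0 : ℝ) • e) := by
      simpa using h2.hasFDerivAt
    exact h3.comp_hasDerivAt (0 : ℝ) (hline 0)

lemma hasLap_of_contDiffAt {d : ℕ} {f : Ed d × ℝ → ℝ} {p : Ed d × ℝ}
    (hf : ContDiffAt ℝ 2 f p) : HasLap f p (lapE f p) :=
  ⟨_, _, fun _ => hasD2_of_contDiffAt hf _, hasD2_of_contDiffAt hf _, rfl⟩

/-! ### Harmonicity of Poisson integrals -/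

/-- Differentiation under the integral sign against a bounded function with compact support. -/
lemma hasDerivAt_integral_mul {d : ℕ} {φ : Ed d → ℝ} (hφ : Measurable φ) {M : ℝ}
    (hM : ∀ z, |φ z| ≤ M) {K : Set (Ed d)} (hK : IsCompact K) (hKφ : ∀ z ∉ K, φ z = 0)
    {g g' : ℝ → Ed d → ℝ} {δ : ℝ}
    (hg : ∀ s ∈ Set.Ioo (-δ) δ, ∀ z, HasDerivAt (fun s => g s z) (g' s z) s)
    (hgc : ∀ s ∈ Set.Ioo (-δ) δ, Continuous (g s))
    (hgc' : ContinuousOn (Function.uncurry g') (Set.Ioo (-δ) δ ×ˢ Set.univ))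
    {s₀ : ℝ} (hs₀ : s₀ ∈ Set.Ioo (-δ) δ) :
    Integrable (fun z => g' s₀ z * φ z) ∧
      HasDerivAt (fun s => ∫ z, g s z * φ z) (∫ z, g' s₀ z * φ z) s₀ := by
  obtain ⟨r, hr, hrs⟩ := Metric.isOpen_iff.1 isOpen_Ioo s₀ hs₀
  have hrs' : closedBall s₀ (r / 2) ⊆ Set.Ioo (-δ) δ :=
    (closedBall_subset_ball (by linarith)).trans hrs
  have hcomp : IsCompact (closedBall s₀ (r / 2) ×ˢ K) := (isCompact_closedBall _ _).prod hK
  obtain ⟨B, hB⟩ := hcomp.exists_bound_of_continuousOn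
    (hgc'.mono (Set.prod_mono hrs' (Set.subset_univ _)))
  have hcont' : Continuous (g' s₀) := by
    have := hgc'.comp (f := fun z : Ed d => (s₀, z)) (s := Set.univ) (by fun_prop)
      (fun z _ => ⟨hs₀, Set.mem_univ _⟩)
    exact continuousOn_univ.1 this
  have hint_mul : ∀ f : Ed d → ℝ, Continuous f → Integrable (fun z => f z * φ z) := by
    intro f hf
    obtain ⟨B', hB'⟩ := hK.exists_bound_of_continuousOn hf.continuousOn
    have : Integrable (K.indicator fun _ => B' * M) :=
      (integrable_indicator_iff hK.measurableSet).2 (integrableOn_const hK.measure_lt_top.ne)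
    refine this.mono' (hf.measurable.mul hφ).aestronglyMeasurable (Eventually.of_forall fun z => ?_)
    by_cases hz : z ∈ K
    · rw [Set.indicator_of_mem hz, norm_mul]
      exact mul_le_mul (hB' z hz) (hM z) (norm_nonneg _) ((norm_nonneg _).trans (hB' z hz))
    · rw [Set.indicator_of_notMem hz, hKφ z hz]; simp
  refine hasDerivAt_integral_of_dominated_loc_of_deriv_le (s := ball s₀ (r / 2))
    (F := fun s z => g s z * φ z) (F' := fun s z => g' s z * φ z)
    (bound := K.indicator fun _ => B * M)
    (ball_mem_nhds _ (by linarith)) ?_ (hint_mul _ (hgc s₀ hs₀)) (hint_mul _ hcont').aestronglyMeasurable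
    (Eventually.of_forall fun z s hs => ?_) ?_ (Eventually.of_forall fun z s hs => ?_)
  · filter_upwards [isOpen_Ioo.mem_nhds hs₀] with s hs
    exact (hint_mul _ (hgc s hs)).aestronglyMeasurable
  · by_cases hz : z ∈ K
    · have hb := hB (s, z) ⟨ball_subset_closedBall hs, hz⟩
      rw [Set.indicator_of_mem hz, norm_mul]
      exact mul_le_mul hb (hM z) (norm_nonneg _) ((norm_nonneg _).trans hb)
    · rw [Set.indicator_of_notMem hz, hKφ z hz]; simp
  · exact (integrable_indicator_iff hK.measurableSet).2 (integrableOn_const hK.measure_lt_top.ne)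
  · exact (hg s (hrs' (ball_subset_closedBall hs)) z).mul_const _

/-- The second derivative of the Poisson kernel at `(w, y)` in the direction `(e, c)`. -/
def pkD2 {d : ℕ} (w : Ed d) (y : ℝ) (e : Ed d) (c : ℝ) : ℝ :=
  let r : ℝ := -((d : ℝ) + 1) / 2
  let ρ : ℝ := ‖w‖ ^ 2 + y ^ 2
  let ρ' : ℝ := 2 * ⟪w, e⟫ + 2 * c * y
  let ρ'' : ℝ := 2 * (‖e‖ ^ 2 + c ^ 2)
  2 * c * (ρ' * r * ρ ^ (r - 1)) +
    y * (ρ'' * r * ρ ^ (r - 1) + ρ' * r * (ρ' * (r - 1) * ρ ^ (r - 1 - 1)))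

/-- The first derivative of the Poisson kernel at `(w, y)` in the direction `(e, c)`. -/
def pkD1 {d : ℕ} (w : Ed d) (y : ℝ) (e : Ed d) (c : ℝ) : ℝ :=
  let r : ℝ := -((d : ℝ) + 1) / 2
  let ρ : ℝ := ‖w‖ ^ 2 + y ^ 2
  let ρ' : ℝ := 2 * ⟪w, e⟫ + 2 * c * y
  c * ρ ^ r + y * (ρ' * r * ρ ^ (r - 1))

section KernelDerivatives

variable {d : ℕ} (w : Ed d) (y : ℝ) (e : Ed d) (c s : ℝ)

lemma hasDerivAt_rho : HasDerivAt (fun s : ℝ => ‖w + s • e‖ ^ 2 + (y + s * c) ^ 2)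
    (2 * ⟪w + s • e, e⟫ + 2 * c * (y + s * c)) s := by
  have h1 : HasDerivAt (fun s : ℝ => w + s • e) e s := by
    simpa using ((hasDerivAt_id s).smul_const e).const_add w
  have h2 : HasDerivAt (fun s : ℝ => y + s * c) c s := by
    simpa using ((hasDerivAt_id s).mul_const c).const_add y
  convert! h1.norm_sq.add (h2.pow 2) using 1
  push_cast; ring

lemma hasDerivAt_rho' : HasDerivAt (fun s : ℝ => 2 * ⟪w + s • e, e⟫ + 2 * c * (y + s * c))
    (2 * (‖e‖ ^ 2 + c ^ 2)) s := by
  have h1 : HasDerivAt (fun s : ℝ => w + s • e) e s := by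
    simpa using ((hasDerivAt_id s).smul_const e).const_add w
  have h2 : HasDerivAt (fun s : ℝ => y + s * c) c s := by
    simpa using ((hasDerivAt_id s).mul_const c).const_add y
  convert! ((h1.inner ℝ (hasDerivAt_const s e)).const_mul 2).add (h2.const_mul (2 * c)) using 1
  rw [inner_zero_right, real_inner_self_eq_norm_sq]; ring

lemma hasDerivAt_pk_line (hy : 0 < y + s * c) :
    HasDerivAt (fun s : ℝ => pk (w + s • e) (y + s * c)) (pkD1 (w + s • e) (y + s * c) e c) s := by
  have h2 : HasDerivAt (fun s : ℝ => y + s * c) c s := by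
    simpa using ((hasDerivAt_id s).mul_const c).const_add y
  have hρ : ‖w + s • e‖ ^ 2 + (y + s * c) ^ 2 ≠ 0 := by positivity
  exact h2.mul ((hasDerivAt_rho w y e c s).rpow_const (Or.inl hρ))

lemma hasDerivAt_pkD1_line (hy : 0 < y + s * c) :
    HasDerivAt (fun s : ℝ => pkD1 (w + s • e) (y + s * c) e c)
      (pkD2 (w + s • e) (y + s * c) e c) s := by
  have h2 : HasDerivAt (fun s : ℝ => y + s * c) c s := by
    simpa using ((hasDerivAt_id s).mul_const c).const_add y
  have hρ : ‖w + s • e‖ ^ 2 + (y + s * c) ^ 2 ≠ 0 := by positivity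
  have hr := hasDerivAt_rho w y e c s
  have hr' := hasDerivAt_rho' w y e c s
  have h := ((hr.rpow_const (p := -((d : ℝ) + 1) / 2) (Or.inl hρ)).const_mul c).add
    (h2.mul ((hr'.mul_const (-((d : ℝ) + 1) / 2)).mul
      (hr.rpow_const (p := -((d : ℝ) + 1) / 2 - 1) (Or.inl hρ))))
  unfold pkD1 pkD2
  convert! h using 1
  simp only [Pi.mul_apply]
  ring

end KernelDerivatives

lemma pkD1_continuousAt {d : ℕ} (e : Ed d) (c : ℝ) (q : Ed d × ℝ) (hq : 0 < q.2) :
    ContinuousAt (fun q : Ed d × ℝ => pkD1 q.1 q.2 e c) q := by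
  have hρ : ‖q.1‖ ^ 2 + q.2 ^ 2 ≠ 0 := by positivity
  have h : ∀ r : ℝ, ContinuousAt (fun q : Ed d × ℝ => (‖q.1‖ ^ 2 + q.2 ^ 2) ^ r) q := fun r =>
    ContinuousAt.rpow_const (by fun_prop) (Or.inl hρ)
  unfold pkD1
  have h1 := h (-((d : ℝ) + 1) / 2)
  have h2 := h (-((d : ℝ) + 1) / 2 - 1)
  have h' : ContinuousAt (fun q : Ed d × ℝ => 2 * ⟪q.1, e⟫ + 2 * c * q.2) q := by fun_prop
  exact (continuousAt_const.mul h1).add (continuousAt_snd.mul ((h'.mul continuousAt_const).mul h2))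

lemma pkD2_continuousAt {d : ℕ} (e : Ed d) (c : ℝ) (q : Ed d × ℝ) (hq : 0 < q.2) :
    ContinuousAt (fun q : Ed d × ℝ => pkD2 q.1 q.2 e c) q := by
  have hρ : ‖q.1‖ ^ 2 + q.2 ^ 2 ≠ 0 := by positivity
  have h : ∀ r : ℝ, ContinuousAt (fun q : Ed d × ℝ => (‖q.1‖ ^ 2 + q.2 ^ 2) ^ r) q := fun r =>
    ContinuousAt.rpow_const (by fun_prop) (Or.inl hρ)
  unfold pkD2
  have h1 := h (-((d : ℝ) + 1) / 2 - 1)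
  have h2 := h (-((d : ℝ) + 1) / 2 - 1 - 1)
  have h' : ContinuousAt (fun q : Ed d × ℝ => 2 * ⟪q.1, e⟫ + 2 * c * q.2) q := by fun_prop
  have hc : ∀ k : ℝ, ContinuousAt (fun _ : Ed d × ℝ => k) q := fun k => continuousAt_const
  exact ((hc _).mul ((h'.mul (hc _)).mul h1)).add (continuousAt_snd.mul
    (((hc _).mul h1).add ((h'.mul (hc _)).mul ((h'.mul (hc _)).mul h2))))

lemma pint_hasD2 {d : ℕ} {φ : Ed d → ℝ} (hφ : Measurable φ) {M : ℝ}
    (hM : ∀ z, |φ z| ≤ M) {K : Set (Ed d)} (hK : IsCompact K) (hKφ : ∀ z ∉ K, φ z = 0)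
    (p : Ed d × ℝ) (hp : 0 < p.2) (e : Ed d) (c : ℝ) (hc : |c| ≤ 1) :
    Integrable (fun z => pkD2 (p.1 - z) p.2 e c * φ z) ∧
      HasD2 (pint φ) p (e, c) (∫ z, pkD2 (p.1 - z) p.2 e c * φ z) := by
  obtain ⟨t, y⟩ := p
  simp only at hp ⊢
  have hpos : ∀ s ∈ Set.Ioo (-y) y, 0 < y + s * c := by
    intro s hs
    have h1 : |s| < y := abs_lt.2 hs
    have h2 : |s * c| < y := by
      rw [abs_mul]
      calc |s| * |c| ≤ |s| * 1 := by gcongr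
        _ < y := by linarith
    linarith [(abs_lt.1 h2).1]
  have hcont : ∀ k : Ed d × ℝ → ℝ, (∀ q : Ed d × ℝ, 0 < q.2 → ContinuousAt k q) →
      ContinuousOn (fun sz : ℝ × Ed d => k (t - sz.2 + sz.1 • e, y + sz.1 * c))
        (Set.Ioo (-y) y ×ˢ Set.univ) := by
    intro k hk sz hsz
    refine ContinuousAt.continuousWithinAt ?_
    exact ContinuousAt.comp (f := fun sz : ℝ × Ed d => (t - sz.2 + sz.1 • e, y + sz.1 * c))
      (hk _ (hpos _ hsz.1)) (by fun_prop)
  have hcont1 : ∀ k : Ed d × ℝ → ℝ, (∀ q : Ed d × ℝ, 0 < q.2 → ContinuousAt k q) →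
      ∀ s ∈ Set.Ioo (-y) y, Continuous (fun z : Ed d => k (t - z + s • e, y + s * c)) := by
    intro k hk s hs
    refine continuous_iff_continuousAt.2 fun z => ?_
    exact ContinuousAt.comp (f := fun z : Ed d => (t - z + s • e, y + s * c))
      (hk _ (hpos _ hs)) (by fun_prop)
  have hA := fun s₀ (hs₀ : s₀ ∈ Set.Ioo (-y) y) => hasDerivAt_integral_mul hφ hM hK hKφ
    (g := fun s z => pk (t - z + s • e) (y + s * c))
    (g' := fun s z => pkD1 (t - z + s • e) (y + s * c) e c) (δ := y)
    (fun s hs z => hasDerivAt_pk_line _ _ _ _ _ (hpos s hs))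
    (hcont1 (fun q => pk q.1 q.2) pk_continuousAt)
    (hcont (fun q => pkD1 q.1 q.2 e c) (pkD1_continuousAt e c)) hs₀
  have h0 : (0 : ℝ) ∈ Set.Ioo (-y) y := ⟨by linarith, hp⟩
  have hB := hasDerivAt_integral_mul hφ hM hK hKφ
    (g := fun s z => pkD1 (t - z + s • e) (y + s * c) e c)
    (g' := fun s z => pkD2 (t - z + s • e) (y + s * c) e c) (δ := y)
    (fun s hs z => hasDerivAt_pkD1_line _ _ _ _ _ (hpos s hs))
    (hcont1 (fun q => pkD1 q.1 q.2 e c) (pkD1_continuousAt e c))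
    (hcont (fun q => pkD2 q.1 q.2 e c) (pkD2_continuousAt e c)) h0
  simp only [zero_smul, add_zero, zero_mul] at hB
  refine ⟨hB.1, fun s => ∫ z, pkD1 (t - z + s • e) (y + s * c) e c * φ z, ?_, hB.2⟩
  filter_upwards [isOpen_Ioo.mem_nhds h0] with s hs
  convert! (hA s hs).2 using 1
  ext s'
  simp only [pint, Prod.fst_add, Prod.snd_add, Prod.smul_fst, Prod.smul_snd, smul_eq_mul]
  congr 1; ext z
  rw [sub_add_eq_add_sub]

/-- The Poisson kernel is harmonic. -/
lemma pkD2_sum {d : ℕ} (w : Ed d) {y : ℝ} (hy : 0 < y) :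
    ∑ i : Fin d, pkD2 w y (EuclideanSpace.single i 1) 0 + pkD2 w y 0 1 = 0 := by
  have hρ : 0 < ‖w‖ ^ 2 + y ^ 2 := by positivity
  have hw : ‖w‖ ^ 2 = ∑ i, w i ^ 2 := by rw [EuclideanSpace.real_norm_sq_eq]
  have hρ1 : (‖w‖ ^ 2 + y ^ 2) ^ (-((d : ℝ) + 1) / 2 - 1) =
      (‖w‖ ^ 2 + y ^ 2) ^ (-((d : ℝ) + 1) / 2 - 1 - 1) * (‖w‖ ^ 2 + y ^ 2) := by
    conv_lhs => rw [← sub_add_cancel (-((d : ℝ) + 1) / 2 - 1) 1, Real.rpow_add_one hρ.ne']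
  set r : ℝ := -((d : ℝ) + 1) / 2 with hr
  set X : ℝ := (‖w‖ ^ 2 + y ^ 2) ^ (r - 1 - 1) with hX
  have hi : ∀ i : Fin d, pkD2 w y (EuclideanSpace.single i 1) 0 =
      2 * y * r * X * (‖w‖ ^ 2 + y ^ 2) + 4 * y * r * (r - 1) * X * w i ^ 2 := by
    intro i
    simp only [pkD2, ← hr, hρ1, ← hX]
    simp only [EuclideanSpace.inner_single_right]
    simp
    ring
  have h0 : pkD2 w y 0 1 = 6 * y * r * X * (‖w‖ ^ 2 + y ^ 2) + 4 * y * r * (r - 1) * X * y ^ 2 := by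
    simp only [pkD2, ← hr, hρ1, ← hX]
    simp
    ring
  rw [h0, Finset.sum_congr rfl fun i _ => hi i, Finset.sum_add_distrib]
  simp only [Finset.sum_const, Finset.card_univ, Fintype.card_fin, nsmul_eq_mul]
  rw [← Finset.mul_sum, ← hw]
  have hd : (d : ℝ) = -2 * r - 1 := by rw [hr]; ring
  rw [hd]; ring

lemma pint_hasLap {d : ℕ} {φ : Ed d → ℝ} (hφ : Measurable φ) {M : ℝ}
    (hM : ∀ z, |φ z| ≤ M) {K : Set (Ed d)} (hK : IsCompact K) (hKφ : ∀ z ∉ K, φ z = 0)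
    (p : Ed d × ℝ) (hp : 0 < p.2) : HasLap (pint φ) p 0 := by
  have hi := fun i : Fin d => pint_hasD2 hφ hM hK hKφ p hp (EuclideanSpace.single i 1) 0 (by simp)
  have h0 := pint_hasD2 hφ hM hK hKφ p hp 0 1 (by simp)
  refine ⟨_, _, fun i => (hi i).2, h0.2, ?_⟩
  rw [← integral_finsetSum _ (fun i _ => (hi i).1),
    ← integral_add (integrable_finsetSum _ fun i _ => (hi i).1) h0.1]
  refine integral_eq_zero_of_ae (Eventually.of_forall fun z => ?_)
  simp only [Pi.zero_apply]
  rw [← Finset.sum_mul, ← add_mul, pkD2_sum _ hp, zero_mul]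

lemma pint_continuousAt {d : ℕ} {φ : Ed d → ℝ} (hφ : Measurable φ) {M : ℝ}
    (hM : ∀ z, |φ z| ≤ M) {K : Set (Ed d)} (hK : IsCompact K) (hKφ : ∀ z ∉ K, φ z = 0)
    (p : Ed d × ℝ) (hp : 0 < p.2) : ContinuousAt (pint φ) p := by
  have hM0 : 0 ≤ M := (abs_nonneg _).trans (hM 0)
  -- Near `p` and uniformly in `z ∈ K` the kernel is bounded, by compactness.
  have hcomp : IsCompact ((closedBall p (p.2 / 2)) ×ˢ K) := (isCompact_closedBall _ _).prod hK
  have hpos : ∀ q ∈ closedBall p (p.2 / 2), 0 < q.2 := by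
    intro q hq
    have h1 : dist q.2 p.2 ≤ p.2 / 2 := (le_max_right _ _).trans (mem_closedBall.1 hq)
    rw [Real.dist_eq] at h1
    linarith [(abs_le.1 h1).1]
  have hc : ∀ q : Ed d × ℝ, 0 < q.2 → ∀ z : Ed d,
      ContinuousAt (fun x : (Ed d × ℝ) × Ed d => pk (x.1.1 - x.2) x.1.2) (q, z) := by
    intro q hq z
    exact ContinuousAt.comp (x := (q, z)) (g := fun q : Ed d × ℝ => pk q.1 q.2)
      (f := fun x : (Ed d × ℝ) × Ed d => (x.1.1 - x.2, x.1.2))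
      (pk_continuousAt (q.1 - z, q.2) hq) (by fun_prop)
  obtain ⟨B, hB⟩ := hcomp.exists_bound_of_continuousOn
    (f := fun x : (Ed d × ℝ) × Ed d => pk (x.1.1 - x.2) x.1.2)
    (fun x hx => (hc x.1 (hpos _ hx.1) x.2).continuousWithinAt)
  have hnear : ∀ᶠ q in 𝓝 p, q ∈ closedBall p (p.2 / 2) := closedBall_mem_nhds _ (by linarith)
  refine continuousAt_of_dominated (bound := K.indicator fun _ => B * M) ?_ ?_
    ((integrable_indicator_iff hK.measurableSet).2 (integrableOn_const hK.measure_lt_top.ne))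
    (Eventually.of_forall fun z => ?_)
  · filter_upwards [hnear] with q hq
    have : Continuous fun z => pk (q.1 - z) q.2 := (pk_continuous (hpos q hq)).comp (by fun_prop)
    exact (this.measurable.mul hφ).aestronglyMeasurable
  · filter_upwards [hnear] with q hq
    refine Eventually.of_forall fun z => ?_
    by_cases hz : z ∈ K
    · have hb := hB (q, z) ⟨hq, hz⟩
      rw [Set.indicator_of_mem hz, norm_mul]
      exact mul_le_mul hb (hM z) (norm_nonneg _) ((norm_nonneg _).trans hb)
    · rw [Set.indicator_of_notMem hz, hKφ z hz]; simp
  · exact ((hc p hp z).comp (f := fun q : Ed d × ℝ => (q, z)) (by fun_prop)).mul_const _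

/-! ### A maximum principle on sawtooth regions -/

/-- Maximum principle on the sawtooth region `{dist(t, F) ≤ a y, 0 < y ≤ h}` for functions with
positive Laplacian; on the part of the boundary at height `0`, which is `F`, only an upper limit
is controlled. -/
lemma sawtooth_max_principle {d : ℕ} {F : Set (Ed d)} (hF : IsCompact F) (hFne : F.Nonempty)
    {a h : ℝ} (ha : 0 < a) {f : Ed d × ℝ → ℝ}
    (hlap : ∀ p : Ed d × ℝ, 0 < p.2 → p.2 < h → infDist p.1 F < a * p.2 → ∃ L > 0, HasLap f p L)
    (hcont : ∀ p : Ed d × ℝ, 0 < p.2 → p.2 ≤ h → infDist p.1 F ≤ a * p.2 → ContinuousAt f p)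
    (hlat : ∀ p : Ed d × ℝ, 0 < p.2 → p.2 ≤ h → infDist p.1 F = a * p.2 → f p ≤ 0)
    (htop : ∀ p : Ed d × ℝ, 0 < p.2 → p.2 = h → infDist p.1 F ≤ a * p.2 → f p ≤ 0)
    (hbot : ∀ t ∈ F, ∀ η > 0, ∀ᶠ p in 𝓝[{p : Ed d × ℝ | 0 < p.2}] (t, (0 : ℝ)), f p ≤ η)
    (p : Ed d × ℝ) (hp : 0 < p.2) (hph : p.2 ≤ h) (hpF : infDist p.1 F ≤ a * p.2) : f p ≤ 0 := by
  by_contra! hpos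
  set S : Set (Ed d × ℝ) := {q | 0 < q.2 ∧ q.2 ≤ h ∧ infDist q.1 F ≤ a * q.2 ∧ f p ≤ f q} with hS
  have hinf : Continuous fun q : Ed d × ℝ => infDist q.1 F :=
    (continuous_infDist_pt F).comp continuous_fst
  set T : Set (Ed d × ℝ) := {q | 0 ≤ q.2 ∧ q.2 ≤ h ∧ infDist q.1 F ≤ a * q.2} with hT
  have hTclosed : IsClosed T :=
    (isClosed_le continuous_const continuous_snd).inter
      ((isClosed_le continuous_snd continuous_const).inter
        (isClosed_le hinf (continuous_const.mul continuous_snd)))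
  have hTcomp : IsCompact T := by
    refine ((hF.cthickening (r := a * h)).prod
      (isCompact_Icc (a := (0 : ℝ)) (b := h))).of_isClosed_subset hTclosed ?_
    rintro q ⟨h0, h1, h2⟩
    refine ⟨?_, h0, h1⟩
    rw [hF.cthickening_eq_biUnion_closedBall (by nlinarith)]
    obtain ⟨x, hx, hxd⟩ := hF.exists_infDist_eq_dist hFne q.1
    refine Set.mem_iUnion₂.2 ⟨x, hx, ?_⟩
    rw [mem_closedBall, ← hxd]
    nlinarith
  have hST : S ⊆ T := fun q hq => ⟨hq.1.le, hq.2.1, hq.2.2.1⟩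
  have hSclosed : IsClosed S := by
    refine isClosed_of_closure_subset fun q hq => ?_
    have hqT : q ∈ T := hTclosed.closure_subset (closure_mono hST hq)
    have hfr := mem_closure_iff_frequently.1 hq
    have hq0 : 0 < q.2 := by
      refine lt_of_le_of_ne hqT.1 fun h0 => ?_
      have hqF : q.1 ∈ F := by
        rw [hF.isClosed.mem_iff_infDist_zero hFne]
        refine le_antisymm ?_ infDist_nonneg
        simpa [← h0] using hqT.2.2
      have hb := hbot q.1 hqF (f p / 2) (by linarith)
      rw [show (q.1, (0 : ℝ)) = q from Prod.ext rfl h0, eventually_nhdsWithin_iff] at hb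
      obtain ⟨r, hr1, hr2⟩ := (hfr.and_eventually hb).exists
      have := hr2 hr1.1
      linarith [hr1.2.2.2]
    refine ⟨hq0, hqT.2.1, hqT.2.2, ?_⟩
    by_contra! hlt
    have := (hcont q hq0 hqT.2.1 hqT.2.2).eventually_lt_const hlt
    obtain ⟨r, hr1, hr2⟩ := (hfr.and_eventually this).exists
    exact absurd hr1.2.2.2 (not_le.2 hr2)
  have hScomp : IsCompact S := hTcomp.of_isClosed_subset hSclosed hST
  obtain ⟨m, hmS, hmax⟩ := hScomp.exists_isMaxOn ⟨p, hp, hph, hpF, le_rfl⟩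
    (fun q hq => (hcont q hq.1 hq.2.1 hq.2.2.1).continuousWithinAt)
  obtain ⟨m0, mh, mF, mf⟩ := hmS
  have hmh : m.2 < h := lt_of_le_of_ne mh fun he => by linarith [htop m m0 he mF]
  have hmF : infDist m.1 F < a * m.2 := lt_of_le_of_ne mF fun he => by linarith [hlat m m0 mh he]
  obtain ⟨L, hL, hfL⟩ := hlap m m0 hmh hmF
  have hloc : IsLocalMax f m := by
    filter_upwards [(isOpen_lt continuous_const continuous_snd).mem_nhds m0,
      (isOpen_lt continuous_snd continuous_const).mem_nhds hmh,
      (isOpen_lt hinf (continuous_const.mul continuous_snd)).mem_nhds hmF] with q h0 h1 h2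
    by_cases hq : f p ≤ f q
    · exact hmax ⟨h0, le_of_lt h1, le_of_lt h2, hq⟩
    · linarith
  linarith [hfL.nonpos_of_isLocalMax hloc]

/-! ### Weak limits of bounded sequences -/

/-- A uniformly bounded sequence of functions supported in a compact set has a weak limit, along
an ultrafilter, with the same bound and support. -/
lemma exists_weak_limit {d : ℕ} {K : Set (Ed d)} (hK : IsCompact K) {M : ℝ}
    (φ : ℕ → Ed d → ℝ) (hφ : ∀ k, Measurable (φ k)) (hM : ∀ k z, |φ k z| ≤ M)
    (hKφ : ∀ k, ∀ z ∉ K, φ k z = 0) :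
    ∃ ψ : Ed d → ℝ, Measurable ψ ∧ (∀ z, |ψ z| ≤ M) ∧ (∀ z ∉ K, ψ z = 0) ∧
      ∃ U : Filter ℕ, U.NeBot ∧ U ≤ atTop ∧ ∀ g : Ed d → ℝ, Continuous g →
        Tendsto (fun k => ∫ z, g z * φ k z) U (𝓝 (∫ z, g z * ψ z)) := by
  have hM0 : 0 ≤ M := (abs_nonneg _).trans (hM 0 0)
  set μ : Measure (Ed d) := volume.restrict K with hμ
  have : IsFiniteMeasure μ := ⟨by rw [hμ, Measure.restrict_apply_univ]; exact hK.measure_lt_top⟩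
  have hmem : ∀ k, MemLp (φ k) 2 μ := fun k =>
    MemLp.of_bound (hφ k).aestronglyMeasurable M (Eventually.of_forall (hM k))
  set x : ℕ → Lp ℝ 2 μ := fun k => (hmem k).toLp (φ k) with hx
  obtain ⟨C, hC⟩ : ∃ C : ℝ, ∀ k, ‖x k‖ ≤ C := by
    refine ⟨_, fun k => Lp.norm_le_of_ae_bound hM0 ?_⟩
    filter_upwards [(hmem k).coeFn_toLp] with z hz
    rw [hx]; simp only; rw [hz]; exact hM k z
  set w : ℕ → WeakDual ℝ (Lp ℝ 2 μ) := fun k =>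
    StrongDual.toWeakDual (InnerProductSpace.toDual ℝ (Lp ℝ 2 μ) (x k)) with hw
  have hcomp : IsCompact (WeakDual.toStrongDual ⁻¹' closedBall (0 : StrongDual ℝ (Lp ℝ 2 μ)) C) :=
    WeakDual.isCompact_closedBall _ _
  obtain ⟨w₀, -, hw₀⟩ := hcomp.ultrafilter_le_nhds ((hyperfilter ℕ).map w) (by
    rw [Ultrafilter.coe_map, le_principal_iff, mem_map]
    refine Eventually.of_forall fun k => ?_
    simp only [Set.mem_preimage, mem_closedBall, dist_zero_right, hw]
    simpa using hC k)
  set x₀ : Lp ℝ 2 μ := (InnerProductSpace.toDual ℝ (Lp ℝ 2 μ)).symm (WeakDual.toStrongDual w₀)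
    with hx₀
  have hlim : ∀ g : Lp ℝ 2 μ, Tendsto (fun k => ⟪x k, g⟫) (hyperfilter ℕ) (𝓝 ⟪x₀, g⟫) := by
    intro g
    have h1 : Tendsto w (hyperfilter ℕ) (𝓝 w₀) := hw₀
    have h2 := ((WeakDual.eval_continuous g).tendsto w₀).comp h1
    have h3 : ⟪x₀, g⟫ = w₀ g := by
      rw [hx₀, InnerProductSpace.toDual_symm_apply]; rfl
    rw [h3]
    exact h2
  -- Testing against an arbitrary square integrable function, in terms of integrals.
  have hlim' : ∀ g : Ed d → ℝ, MemLp g 2 μ →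
      Tendsto (fun k => ∫ z, g z * φ k z ∂μ) (hyperfilter ℕ) (𝓝 (∫ z, g z * x₀ z ∂μ)) := by
    intro g hg
    have h := hlim (hg.toLp g)
    have e1 : ∀ k, ⟪x k, hg.toLp g⟫ = ∫ z, g z * φ k z ∂μ := by
      intro k
      rw [L2.inner_def]
      refine integral_congr_ae ?_
      filter_upwards [(hmem k).coeFn_toLp, hg.coeFn_toLp] with z h1 h2
      rw [hx]; simp only; rw [h1, h2]; simp
    have e2 : ⟪x₀, hg.toLp g⟫ = ∫ z, g z * x₀ z ∂μ := by
      rw [L2.inner_def]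
      refine integral_congr_ae ?_
      filter_upwards [hg.coeFn_toLp] with z h2
      rw [h2]; simp
    simpa only [e1, e2] using h
  have hx₀i : Integrable x₀ μ := (Lp.memLp x₀).integrable (by norm_num)
  have hset : ∀ s, MeasurableSet s →
      Tendsto (fun k => ∫ z in s, φ k z ∂μ) (hyperfilter ℕ) (𝓝 (∫ z in s, x₀ z ∂μ)) := by
    intro s hs
    have h := hlim' (s.indicator fun _ => 1) ((memLp_const (1 : ℝ)).indicator hs)
    have e : ∀ f : Ed d → ℝ, ∫ z, s.indicator (fun _ => (1 : ℝ)) z * f z ∂μ = ∫ z in s, f z ∂μ := by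
      intro f
      rw [← integral_indicator hs]
      refine integral_congr_ae (Eventually.of_forall fun z => ?_)
      by_cases hz : z ∈ s <;> simp [hz]
    simpa only [e] using h
  have hup : ∀ᵐ z ∂μ, x₀ z ≤ M := by
    refine ae_le_of_forall_setIntegral_le hx₀i (integrable_const M) fun s hs _ => ?_
    refine le_of_tendsto (hset s hs) (Eventually.of_forall fun k => ?_)
    exact integral_mono ((hmem k).integrable (by norm_num)).integrableOn
      (integrable_const M) fun z => (abs_le.1 (hM k z)).2
  have hlo : ∀ᵐ z ∂μ, -M ≤ x₀ z := by
    refine ae_le_of_forall_setIntegral_le (integrable_const (-M)) hx₀i fun s hs _ => ?_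
    refine ge_of_tendsto (hset s hs) (Eventually.of_forall fun k => ?_)
    exact integral_mono (integrable_const (-M))
      ((hmem k).integrable (by norm_num)).integrableOn fun z => (abs_le.1 (hM k z)).1
  have hx₀m : Measurable x₀ := (Lp.stronglyMeasurable x₀).measurable
  have hres : ∀ f g : Ed d → ℝ, (∀ z ∉ K, f z = 0) → ∫ z, g z * f z = ∫ z, g z * f z ∂μ := by
    intro f g hf
    rw [hμ, setIntegral_eq_integral_of_forall_compl_eq_zero]
    intro z hz; rw [hf z hz, mul_zero]
  set ψ : Ed d → ℝ := K.indicator fun z => max (-M) (min M (x₀ z)) with hψ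
  have hψ0 : ∀ z ∉ K, ψ z = 0 := fun z hz => Set.indicator_of_notMem hz _
  refine ⟨ψ, (measurable_const.max (measurable_const.min hx₀m)).indicator hK.measurableSet, ?_,
    hψ0, hyperfilter ℕ, inferInstance, ?_, ?_⟩
  · intro z
    by_cases hz : z ∈ K
    · rw [hψ, Set.indicator_of_mem hz, abs_le]
      exact ⟨le_max_left _ _, max_le (by linarith) (min_le_left _ _)⟩
    · rw [hψ0 z hz, abs_zero]; exact hM0
  · rw [← Nat.cofinite_eq_atTop]; exact hyperfilter_le_cofinite
  · intro g hg
    obtain ⟨B, hB⟩ := hK.exists_bound_of_continuousOn hg.continuousOn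
    have hgm : MemLp g 2 μ := MemLp.of_bound hg.measurable.aestronglyMeasurable B (by
      filter_upwards [ae_restrict_mem hK.measurableSet] with z hz using hB z hz)
    have h := hlim' g hgm
    rw [hres ψ g hψ0]
    have e : ∫ z, g z * ψ z ∂μ = ∫ z, g z * x₀ z ∂μ := by
      refine integral_congr_ae ?_
      filter_upwards [ae_restrict_mem hK.measurableSet, hup, hlo] with z hz h1 h2
      rw [hψ, Set.indicator_of_mem hz, min_eq_right h1, max_eq_right h2]
    rw [e]
    simpa only [hres _ g (hKφ _)] using h

/-! ### Comparison with Poisson integrals on a sawtooth region -/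

lemma HasLap.comp_add {d : ℕ} {f : Ed d × ℝ → ℝ} {p b : Ed d × ℝ} {L : ℝ}
    (hf : HasLap f (p + b) L) : HasLap (fun q => f (q + b)) p L := by
  have key : ∀ e c, HasD2 f (p + b) e c → HasD2 (fun q => f (q + b)) p e c := by
    rintro e c ⟨g, hg, hc⟩
    refine ⟨g, ?_, hc⟩
    simpa only [add_right_comm p _ b] using hg
  obtain ⟨c, c₀, h1, h2, h3⟩ := hf
  exact ⟨c, c₀, fun i => key _ _ (h1 i), key _ _ h2, h3⟩

/-- The mass in the ball of radius `a` of the Poisson kernel at height `1`; by scaling, its mass at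
height `y` in the ball of radius `a y`. -/
def coneMass (d : ℕ) (a : ℝ) : ℝ := ∫ z in ball (0 : Ed d) a, pk z 1

lemma coneMass_pos (d : ℕ) {a : ℝ} (ha : 0 < a) : 0 < coneMass d a := by
  unfold coneMass
  rw [setIntegral_pos_iff_support_of_nonneg_ae
    (Eventually.of_forall fun z => pk_nonneg z zero_le_one) (pk_integrable d).integrableOn]
  have : Function.support (fun z : Ed d => pk z 1) = Set.univ := by
    ext z; simp [(pk_pos z one_pos).ne']
  rw [this, Set.univ_inter]
  exact measure_ball_pos _ _ ha

lemma pint_indicator_le {d : ℕ} {F : Set (Ed d)} (p : Ed d × ℝ) (hp : 0 < p.2) :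
    pint (F.indicator 1) p ≤ pmass d := by
  have h := pint_abs_le (φ := F.indicator 1) (M := 1) (fun z => by
    by_cases hz : z ∈ F <;> simp [hz]) p hp
  rw [mul_one] at h
  exact (abs_le.1 h).2

/-- On the lateral boundary of the sawtooth region over `F`, the (unnormalized) harmonic
measure of the complement of `F` is at least `coneMass d a`: the ball of radius `a y` about `t`
misses `F`. -/
lemma pint_indicator_le_lateral {d : ℕ} {F : Set (Ed d)} (hF : MeasurableSet F) {a : ℝ}
    (p : Ed d × ℝ) (hp : 0 < p.2) (hpF : a * p.2 ≤ infDist p.1 F) :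
    pint (F.indicator 1) p ≤ pmass d - coneMass d a := by
  obtain ⟨t, y⟩ := p
  simp only at hp hpF
  rw [pint_eq_dilate _ t hp]
  have hsplit := integral_add_compl (measurableSet_ball (x := (0 : Ed d)) (ε := a)) (pk_integrable d)
  have hm : pmass d - coneMass d a = ∫ z in (ball (0 : Ed d) a)ᶜ, pk z 1 := by
    rw [pmass, coneMass, ← hsplit]; ring
  have h1 : ∀ z : Ed d, |F.indicator (1 : Ed d → ℝ) z| ≤ 1 := fun z => by
    by_cases hz : z ∈ F <;> simp [hz]
  have hmeas : Measurable (F.indicator (1 : Ed d → ℝ)) := measurable_one.indicator hF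
  rw [hm, ← integral_indicator measurableSet_ball.compl]
  refine integral_mono (pk_mul_integrable hmeas h1 t y)
    ((integrable_indicator_iff measurableSet_ball.compl).2 (pk_integrable d).integrableOn)
    fun z => ?_
  simp only
  by_cases hz : z ∈ ball (0 : Ed d) a
  · have hzF : t - y • z ∉ F := by
      intro hmem
      have := infDist_le_dist_of_mem (x := t) hmem
      rw [dist_eq_norm, sub_sub_cancel, norm_smul, Real.norm_eq_abs, abs_of_pos hp] at this
      rw [mem_ball_zero_iff] at hz
      nlinarith
    rw [Set.indicator_of_notMem hzF, mul_zero, Set.indicator_of_notMem (by simpa using hz)]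
  · rw [Set.indicator_of_mem (s := (ball (0 : Ed d) a)ᶜ) hz]
    calc pk z 1 * F.indicator 1 (t - y • z) ≤ pk z 1 * 1 := by
          refine mul_le_mul_of_nonneg_left ?_ (pk_nonneg z zero_le_one)
          exact (abs_le.1 (h1 _)).2
      _ = pk z 1 := mul_one _

open Classical in
/-- The values of `v` at height `ε` inside the sawtooth region over `F`, extended by zero. -/
def slice {d : ℕ} (F : Set (Ed d)) (a : ℝ) (v : Ed d × ℝ → ℝ) (ε : ℝ) (t : Ed d) : ℝ :=
  if infDist t F < a * ε then v (t, ε) else 0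

section Sawtooth

variable {d : ℕ} {F : Set (Ed d)} {a h M : ℝ} {v : Ed d × ℝ → ℝ}

lemma slice_measurable {ε : ℝ} (hc : ∀ t, infDist t F < a * ε → ContinuousAt v (t, ε)) :
    Measurable (slice F a v ε) := by
  classical
  have hopen : IsOpen {t : Ed d | infDist t F < a * ε} :=
    isOpen_lt (continuous_infDist_pt F) continuous_const
  have h1 : ContinuousOn (fun t => v (t, ε)) {t : Ed d | infDist t F < a * ε} := fun t ht =>
    (ContinuousAt.comp (f := fun t : Ed d => (t, ε)) (hc t ht) (by fun_prop)).continuousWithinAt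
  have h2 := h1.measurable_piecewise (g := fun _ => (0 : ℝ)) continuousOn_const hopen.measurableSet
  convert! h2 using 1

lemma slice_abs_le (hM0 : 0 ≤ M) {ε : ℝ} (hv : ∀ t, infDist t F < a * ε → |v (t, ε)| ≤ M)
    (t : Ed d) : |slice F a v ε t| ≤ M := by
  unfold slice
  split_ifs with ht
  · exact hv t ht
  · rwa [abs_zero]

lemma slice_eq_zero (hF : IsCompact F) (hFne : F.Nonempty) (ha : 0 < a) {ε : ℝ} (hε : ε ≤ h)
    (t : Ed d) (ht : t ∉ cthickening (a * h) F) : slice F a v ε t = 0 := by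
  refine if_neg fun hlt => ht ?_
  obtain ⟨x, hx, hxd⟩ := hF.exists_infDist_eq_dist hFne t
  refine mem_cthickening_of_dist_le t x _ F hx ?_
  rw [← hxd]; nlinarith

lemma slice_continuousAt (ha : 0 < a) {ε : ℝ} (hε : 0 < ε) {t : Ed d} (ht : t ∈ F)
    (hc : ContinuousAt v (t, ε)) :
    ContinuousAt (slice F a v ε) t ∧ slice F a v ε t = v (t, ε) := by
  have h0 : infDist t F < a * ε := by rw [infDist_zero_of_mem ht]; positivity
  refine ⟨?_, if_pos h0⟩
  have h1 : ContinuousAt (fun t : Ed d => v (t, ε)) t :=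
    ContinuousAt.comp (f := fun t : Ed d => (t, ε)) hc (by fun_prop)
  refine h1.congr ?_
  filter_upwards [(isOpen_lt (continuous_infDist_pt F) continuous_const).mem_nhds h0] with t' ht'
  exact (if_pos ht').symm

/-- One-sided comparison (`s = ± 1`) between a translate of `v` and the Poisson integral of its
boundary values. The barrier is a multiple of the harmonic measure of the complement of `F`, large
on the lateral boundary, plus a quadratic in the height that absorbs the Laplacian of `v`. -/
lemma sawtooth_compare (hF : IsCompact F) (hFne : F.Nonempty) (ha : 0 < a) (hM0 : 0 ≤ M)
    (hv : ∀ p : Ed d × ℝ, 0 < p.2 → p.2 < 2 * h → infDist p.1 F < a * p.2 →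
      ContDiffAt ℝ 2 v p ∧ |v p| ≤ M ∧ |lapE v p| ≤ M)
    {ε : ℝ} (hε : 0 < ε) (hεh : ε < h) {s : ℝ} (hs : |s| = 1)
    (p : Ed d × ℝ) (hp : 0 < p.2) (hph : p.2 ≤ h) (hpF : infDist p.1 F ≤ a * p.2) :
    s * (v (p + (0, ε)) - (pmass d)⁻¹ * pint (slice F a v ε) p) ≤
      2 * M / coneMass d a * (pmass d - pint (F.indicator 1) p) +
        ((M + 1) * h + 2 * M / h) * p.2 := by
  have hh : 0 < h := hε.trans hεh
  have hT := pmass_pos d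
  have hca := coneMass_pos d ha
  set φ := slice F a v ε with hφdef
  set χ : Ed d → ℝ := F.indicator 1 with hχ
  set C₁ := 2 * M / coneMass d a with hC₁
  set C₂ := (M + 1) * h + 2 * M / h with hC₂
  have hC₁0 : 0 ≤ C₁ := by positivity
  have hsl : ∀ t, infDist t F < a * ε → ContDiffAt ℝ 2 v (t, ε) ∧ |v (t, ε)| ≤ M ∧
      |lapE v (t, ε)| ≤ M := fun t ht => hv (t, ε) hε (by simp only; linarith) ht
  have hφm : Measurable φ := slice_measurable fun t ht => (hsl t ht).1.continuousAt
  have hφM : ∀ t, |φ t| ≤ M := slice_abs_le hM0 fun t ht => (hsl t ht).2.1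
  have hφK : ∀ t ∉ cthickening (a * h) F, φ t = 0 := slice_eq_zero hF hFne ha hεh.le
  have hKc : IsCompact (cthickening (a * h) F) := hF.cthickening
  have hχm : Measurable χ := measurable_one.indicator hF.measurableSet
  have hχM : ∀ t, |χ t| ≤ 1 := fun t => by by_cases ht : t ∈ F <;> simp [hχ, ht]
  have hχK : ∀ t ∉ F, χ t = 0 := fun t ht => Set.indicator_of_notMem ht _
  -- Points of the closed region are moved into the open region by the translation.
  have hsh : ∀ q : Ed d × ℝ, 0 < q.2 → q.2 ≤ h → infDist q.1 F ≤ a * q.2 →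
      ContDiffAt ℝ 2 v (q + (0, ε)) ∧ |v (q + (0, ε))| ≤ M ∧ |lapE v (q + (0, ε))| ≤ M := by
    intro q h0 h1 h2
    refine hv _ ?_ ?_ ?_
    · simp only [Prod.snd_add]; linarith
    · simp only [Prod.snd_add]; linarith
    · simp only [Prod.snd_add, Prod.fst_add, add_zero]; nlinarith
  have hPφ : ∀ q : Ed d × ℝ, 0 < q.2 → |(pmass d)⁻¹ * pint φ q| ≤ M := by
    intro q hq
    rw [abs_mul, abs_of_pos (inv_pos.2 hT), inv_mul_le_iff₀ hT]
    exact pint_abs_le hφM q hq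
  have hsle : ∀ x : ℝ, s * x ≤ |x| := fun x => by
    calc s * x ≤ |s * x| := le_abs_self _
      _ = |x| := by rw [abs_mul, hs, one_mul]
  have hdiff : ∀ q : Ed d × ℝ, 0 < q.2 → q.2 ≤ h → infDist q.1 F ≤ a * q.2 →
      s * v (q + (0, ε)) + -(s * (pmass d)⁻¹) * pint φ q ≤ 2 * M := by
    intro q h0 h1 h2
    have e1 := (hsle (v (q + (0, ε)))).trans (hsh q h0 h1 h2).2.1
    have e2 := (hsle (-((pmass d)⁻¹ * pint φ q))).trans_eq (abs_neg _) |>.trans (hPφ q h0)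
    have e3 : s * -((pmass d)⁻¹ * pint φ q) = -(s * (pmass d)⁻¹) * pint φ q := by ring
    linarith
  set f : Ed d × ℝ → ℝ := fun q => s * v (q + (0, ε)) + -(s * (pmass d)⁻¹) * pint φ q +
    C₁ * pint χ q + (-(C₁ * pmass d) + -C₂ * q.2 + (M + 1) * q.2 ^ 2) with hf
  have hfp : f p ≤ 0 := by
    refine sawtooth_max_principle hF hFne ha (h := h) ?_ ?_ ?_ ?_ ?_ p hp hph hpF
    · intro q h0 h1 h2
      obtain ⟨hq1, -, hq3⟩ := hsh q h0 h1.le h2.le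
      refine ⟨_, ?_, ((((hasLap_of_contDiffAt hq1).comp_add.const_mul s).add
        ((pint_hasLap hφm hφM hKc hφK q h0).const_mul (-(s * (pmass d)⁻¹)))).add
        ((pint_hasLap hχm hχM hF hχK q h0).const_mul C₁)).add
        (hasLap_height q (-(C₁ * pmass d)) (-C₂) (M + 1))⟩
      have := (hsle (-lapE v (q + (0, ε)))).trans_eq (abs_neg _) |>.trans hq3
      rw [mul_neg] at this
      linarith
    · intro q h0 h1 h2
      have hc1 : ContinuousAt (fun q => v (q + (0, ε))) q :=
        ContinuousAt.comp (f := fun q : Ed d × ℝ => q + (0, ε)) (hsh q h0 h1 h2).1.continuousAt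
          (by fun_prop)
      have hc2 := pint_continuousAt hφm hφM hKc hφK q h0
      have hc3 := pint_continuousAt hχm hχM hF hχK q h0
      have hc4 : ContinuousAt (fun q : Ed d × ℝ =>
        -(C₁ * pmass d) + -C₂ * q.2 + (M + 1) * q.2 ^ 2) q := by fun_prop
      exact (((hc1.const_mul s).add (hc2.const_mul _)).add (hc3.const_mul _)).add hc4
    · intro q h0 h1 h2
      have e1 := hdiff q h0 h1 h2.le
      have e2 : pint χ q ≤ pmass d - coneMass d a :=
        pint_indicator_le_lateral hF.measurableSet q h0 h2.ge
      have e3 : C₁ * pint χ q ≤ C₁ * (pmass d - coneMass d a) := by gcongr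
      have e4 : C₁ * coneMass d a = 2 * M := by rw [hC₁]; field_simp
      have e5 : (M + 1) * q.2 ^ 2 ≤ C₂ * q.2 := by
        have : (M + 1) * q.2 ≤ C₂ := by
          have : 0 ≤ 2 * M / h := by positivity
          have : (M + 1) * q.2 ≤ (M + 1) * h := by gcongr
          linarith
        nlinarith
      simp only [hf]
      linarith
    · intro q h0 h1 h2
      have e1 := hdiff q h0 h1.le h2
      have e2 : pint χ q ≤ pmass d := pint_indicator_le q h0
      have e3 : C₁ * pint χ q ≤ C₁ * pmass d := by gcongr
      have e4 : C₂ * q.2 = (M + 1) * q.2 ^ 2 + 2 * M := by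
        rw [hC₂, h1]; field_simp
      simp only [hf]
      linarith
    · intro t ht η hη
      have hcv : ContinuousAt v (t, ε) := by
        refine (hsl t ?_).1.continuousAt
        rw [infDist_zero_of_mem ht]; positivity
      obtain ⟨hcφ, hφt⟩ := slice_continuousAt ha hε ht hcv
      have l1 : Tendsto (fun q : Ed d × ℝ => v (q + (0, ε)))
          (𝓝[{q : Ed d × ℝ | 0 < q.2}] (t, (0 : ℝ))) (𝓝 (v (t, ε))) := by
        have : ContinuousAt (fun q : Ed d × ℝ => v (q + (0, ε))) (t, 0) :=
          ContinuousAt.comp (f := fun q : Ed d × ℝ => q + (0, ε)) (by simpa using hcv)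
            (by fun_prop)
        have h2 := this.tendsto.mono_left (nhdsWithin_le_nhds (s := {q : Ed d × ℝ | 0 < q.2}))
        simpa using h2
      have l2 := pint_tendsto_of_continuousAt hφm hφM hcφ
      have l3 : Tendsto (fun q : Ed d × ℝ => -C₂ * q.2 + (M + 1) * q.2 ^ 2)
          (𝓝[{q : Ed d × ℝ | 0 < q.2}] (t, (0 : ℝ))) (𝓝 0) := by
        have : ContinuousAt (fun q : Ed d × ℝ => -C₂ * q.2 + (M + 1) * q.2 ^ 2) (t, 0) := by
          fun_prop
        have h2 := this.tendsto.mono_left (nhdsWithin_le_nhds (s := {q : Ed d × ℝ | 0 < q.2}))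
        simpa using h2
      have l4 := ((l1.const_mul s).add (l2.const_mul (-(s * (pmass d)⁻¹)))).add l3
      have e0 : s * v (t, ε) + -(s * (pmass d)⁻¹) * (pmass d * φ t) + 0 = 0 := by
        rw [hφdef, hφt]; field_simp; ring
      rw [e0] at l4
      filter_upwards [l4.eventually_lt_const hη, self_mem_nhdsWithin] with q hq hq0
      have e2 : pint χ q ≤ pmass d := pint_indicator_le q hq0
      have e3 : C₁ * pint χ q ≤ C₁ * pmass d := by gcongr
      simp only [hf]
      linarith
  simp only [hf] at hfp
  have e6 : 0 ≤ (M + 1) * p.2 ^ 2 := by positivity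
  have e7 : s * (v (p + (0, ε)) - (pmass d)⁻¹ * pint φ p) =
    s * v (p + (0, ε)) + -(s * (pmass d)⁻¹) * pint φ p := by ring
  rw [e7, mul_sub]
  linarith

/-- Bounded functions with bounded Laplacian on a sawtooth region over a compact set `F` have
limits within the cones at almost every point of `F`. -/
lemma sawtooth_limit (hF : IsCompact F) (ha : 0 < a) (hh : 0 < h) (hM0 : 0 ≤ M)
    (hv : ∀ p : Ed d × ℝ, 0 < p.2 → p.2 < 2 * h → infDist p.1 F < a * p.2 →
      ContDiffAt ℝ 2 v p ∧ |v p| ≤ M ∧ |lapE v p| ≤ M) :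
    ∀ᵐ x : Ed d, x ∈ F → ∃ L : ℝ, Tendsto v (𝓝[cone a x] (x, (0 : ℝ))) (𝓝 L) := by
  rcases F.eq_empty_or_nonempty with rfl | hFne
  · exact Eventually.of_forall fun x hx => absurd hx (Set.notMem_empty x)
  have hT := pmass_pos d
  set ε : ℕ → ℝ := fun k => h / (k + 2) with hε
  have hε0 : ∀ k, 0 < ε k := fun k => by positivity
  have hεh : ∀ k, ε k < h := fun k => by
    have : (0 : ℝ) ≤ k := by positivity
    rw [hε]; simp only
    rw [div_lt_iff₀ (by positivity)]; nlinarith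
  have hεlim : Tendsto ε atTop (𝓝 0) :=
    (tendsto_const_nhds (x := h)).div_atTop
      (tendsto_atTop_add_const_right _ 2 tendsto_natCast_atTop_atTop)
  have hsl : ∀ k t, infDist t F < a * ε k → ContDiffAt ℝ 2 v (t, ε k) ∧ |v (t, ε k)| ≤ M ∧
      |lapE v (t, ε k)| ≤ M := fun k t ht =>
    hv (t, ε k) (hε0 k) (by simp only; linarith [hεh k]) ht
  obtain ⟨ψ, hψm, hψM, -, U, hU, hUtop, hlim⟩ := exists_weak_limit
    (hF.cthickening (r := a * h)) (fun k => slice F a v (ε k))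
    (fun k => slice_measurable fun t ht => (hsl k t ht).1.continuousAt)
    (fun k => slice_abs_le hM0 fun t ht => (hsl k t ht).2.1)
    (fun k => slice_eq_zero hF hFne ha (hεh k).le)
  set χ : Ed d → ℝ := F.indicator 1 with hχ
  set C₁ := 2 * M / coneMass d a
  set C₂ := (M + 1) * h + 2 * M / h
  have hbound : ∀ q : Ed d × ℝ, 0 < q.2 → q.2 < h → infDist q.1 F < a * q.2 →
      |v q - (pmass d)⁻¹ * pint ψ q| ≤ C₁ * (pmass d - pint χ q) + C₂ * q.2 := by
    intro q h0 h1 h2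
    have l1 : Tendsto (fun k => v (q + (0, ε k))) U (𝓝 (v q)) := by
      have hc : ContinuousAt v q := (hv q h0 (by linarith) h2).1.continuousAt
      have h3 : Tendsto (fun k => q + ((0 : Ed d), ε k)) U (𝓝 q) := by
        have h4 : Tendsto (fun k => q + ((0 : Ed d), ε k)) U (𝓝 (q + (0, 0))) :=
          tendsto_const_nhds.add (tendsto_const_nhds.prodMk_nhds (hεlim.mono_left hUtop))
        have h5 : q + ((0 : Ed d), (0 : ℝ)) = q := by ext <;> simp
        rwa [h5] at h4
      exact hc.tendsto.comp h3
    have l2 : Tendsto (fun k => pint (slice F a v (ε k)) q) U (𝓝 (pint ψ q)) :=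
      hlim (fun z => pk (q.1 - z) q.2) ((pk_continuous h0).comp (by fun_prop))
    refine le_of_tendsto (l1.sub (l2.const_mul (pmass d)⁻¹)).abs (Eventually.of_forall fun k => ?_)
    have c1 := sawtooth_compare hF hFne ha hM0 hv (hε0 k) (hεh k) (s := 1) (by simp)
      q h0 h1.le h2.le
    have c2 := sawtooth_compare hF hFne ha hM0 hv (hε0 k) (hεh k) (s := -1) (by simp)
      q h0 h1.le h2.le
    rw [one_mul] at c1
    rw [neg_one_mul] at c2
    exact abs_le'.2 ⟨c1, c2⟩
  have hχm : Measurable χ := measurable_one.indicator hF.measurableSet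
  have hχM : ∀ t, |χ t| ≤ 1 := fun t => by by_cases ht : t ∈ F <;> simp [hχ, ht]
  filter_upwards [pint_nt_limit hψm hψM a, pint_nt_limit hχm hχM a] with x hx1 hx2 hxF
  refine ⟨ψ x, ?_⟩
  have hχx : χ x = 1 := by simp [hχ, hxF]
  rw [hχx, mul_one] at hx2
  have ly : Tendsto (fun q : Ed d × ℝ => q.2) (𝓝[cone a x] (x, (0 : ℝ))) (𝓝 0) :=
    (continuous_snd.tendsto (x, (0 : ℝ))).mono_left nhdsWithin_le_nhds
  have lr : Tendsto (fun q : Ed d × ℝ => C₁ * (pmass d - pint χ q) + C₂ * q.2)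
      (𝓝[cone a x] (x, (0 : ℝ))) (𝓝 0) := by
    have := ((hx2.const_sub (pmass d)).const_mul C₁).add (ly.const_mul C₂)
    simpa using this
  have ld : Tendsto (fun q => v q - (pmass d)⁻¹ * pint ψ q) (𝓝[cone a x] (x, (0 : ℝ))) (𝓝 0) := by
    refine squeeze_zero_norm' ?_ lr
    filter_upwards [self_mem_nhdsWithin, ly.eventually_lt_const hh] with q hq hqh
    exact hbound q hq.1 hqh ((infDist_le_dist_of_mem hxF).trans_lt hq.2)
  have hfin := ld.add (hx1.const_mul (pmass d)⁻¹)
  have e : 0 + (pmass d)⁻¹ * (pmass d * ψ x) = ψ x := by field_simp; ring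
  rw [e] at hfin
  simpa using hfin

end Sawtooth

/-! ### Removing the first order term of the Dunkl Laplacian -/

/-- The exponent `∑ κ(α) log |⟨α, x⟩|`; on `ℝ`, `Real.log` is even, so no absolute value is
needed. -/
def logWeight {d : ℕ} (Rp : Finset (Ed d)) (κ : Ed d → ℝ) (p : Ed d × ℝ) : ℝ :=
  ∑ α ∈ Rp, κ α * Real.log ⟪α, p.1⟫

/-- The weight `W(x) = ∏ |⟨α, x⟩| ^ κ(α)`, as a function on `ℝ^d × ℝ`, written as an exponential;
the two agree at regular points. -/
def dWeight {d : ℕ} (Rp : Finset (Ed d)) (κ : Ed d → ℝ) (p : Ed d × ℝ) : ℝ :=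
  Real.exp (logWeight Rp κ p)

section Weight

variable {d : ℕ} {Rp : Finset (Ed d)} {κ : Ed d → ℝ}

lemma contDiffAt_dWeight {p : Ed d × ℝ} (hp : ∀ α ∈ Rp, ⟪α, p.1⟫ ≠ (0 : ℝ)) :
    ContDiffAt ℝ 2 (dWeight Rp κ) p := by
  refine ContDiffAt.exp (ContDiffAt.sum fun α hα =>
    contDiffAt_const.mul (ContDiffAt.log ?_ (hp α hα)))
  exact contDiffAt_const.inner ℝ contDiffAt_fst

lemma fderiv_dWeight {p : Ed d × ℝ} (hp : ∀ α ∈ Rp, ⟪α, p.1⟫ ≠ (0 : ℝ)) (e : Ed d × ℝ) :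
    fderiv ℝ (dWeight Rp κ) p e =
      dWeight Rp κ p * ∑ α ∈ Rp, κ α * (⟪α, e.1⟫ / ⟪α, p.1⟫) := by
  have h1 : ∀ α ∈ Rp, HasFDerivAt (fun q : Ed d × ℝ => κ α * Real.log ⟪α, q.1⟫)
      (κ α • ((⟪α, p.1⟫ : ℝ)⁻¹ • ((innerSL ℝ α).comp (ContinuousLinearMap.fst ℝ (Ed d) ℝ)))) p := by
    intro α hα
    have h0 : HasFDerivAt (fun q : Ed d × ℝ => ⟪α, q.1⟫)
        ((innerSL ℝ α).comp (ContinuousLinearMap.fst ℝ (Ed d) ℝ)) p :=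
      ((innerSL ℝ α).comp (ContinuousLinearMap.fst ℝ (Ed d) ℝ)).hasFDerivAt
    exact (h0.log (hp α hα)).const_mul (κ α)
  have h2 : HasFDerivAt (dWeight Rp κ) _ p := (HasFDerivAt.fun_sum h1).exp
  rw [h2.fderiv]
  simp only [_root_.smul_apply, _root_.sum_apply,
    ContinuousLinearMap.comp_apply, ContinuousLinearMap.coe_fst', innerSL_apply_apply, smul_eq_mul]
  unfold dWeight logWeight
  congr 1
  refine Finset.sum_congr rfl fun α _ => ?_
  rw [div_eq_inv_mul]

end Weight

lemma contDiffAt_fderiv_apply {d : ℕ} {f : Ed d × ℝ → ℝ} {p : Ed d × ℝ}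
    (hf : ContDiffAt ℝ 2 f p) (e : Ed d × ℝ) :
    ContDiffAt ℝ 1 (fun q => fderiv ℝ f q e) p :=
  (hf.fderiv_right (m := 1) (by norm_num)).clm_apply contDiffAt_const

lemma continuousAt_lapE {d : ℕ} {f : Ed d × ℝ → ℝ} {p : Ed d × ℝ}
    (hf : ContDiffAt ℝ 2 f p) : ContinuousAt (lapE f) p := by
  have key : ∀ e : Ed d × ℝ, ContinuousAt (fun q => pd2 f q e) p := fun e =>
    (((contDiffAt_fderiv_apply hf e).fderiv_right (m := 0) (by norm_num)).clm_apply
      contDiffAt_const).continuousAt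
  unfold lapE
  exact (tendsto_finsetSum _ fun i _ => key _).add (key _)

lemma pd2_mul {d : ℕ} {f g : Ed d × ℝ → ℝ} {p : Ed d × ℝ} (hf : ContDiffAt ℝ 2 f p)
    (hg : ContDiffAt ℝ 2 g p) (e : Ed d × ℝ) :
    pd2 (fun q => f q * g q) p e =
      f p * pd2 g p e + 2 * (fderiv ℝ f p e * fderiv ℝ g p e) + g p * pd2 f p e := by
  have h1 : (fun q => fderiv ℝ (fun q => f q * g q) q e) =ᶠ[𝓝 p]
      fun q => f q * fderiv ℝ g q e + g q * fderiv ℝ f q e := by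
    filter_upwards [hf.eventually (by simp), hg.eventually (by simp)] with q h1 h2
    rw [fderiv_fun_mul (h1.differentiableAt (by norm_num)) (h2.differentiableAt (by norm_num))]
    simp
  have df := hf.differentiableAt (by norm_num)
  have dg := hg.differentiableAt (by norm_num)
  have df' := (contDiffAt_fderiv_apply hf e).differentiableAt (by norm_num)
  have dg' := (contDiffAt_fderiv_apply hg e).differentiableAt (by norm_num)
  unfold pd2
  rw [h1.fderiv_eq, fderiv_fun_add (df.fun_mul dg') (dg.fun_mul df'), fderiv_fun_mul df dg',
    fderiv_fun_mul dg df']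
  simp only [_root_.add_apply, _root_.smul_apply, smul_eq_mul]
  ring

/-- Multiplication by the weight turns the Dunkl Laplacian into the Euclidean one, up to terms
without derivatives of `u`. -/
lemma lapE_dWeight_mul {d : ℕ} {Rp : Finset (Ed d)} {κ : Ed d → ℝ} {u : Ed d × ℝ → ℝ}
    {p : Ed d × ℝ} (hp : ∀ α ∈ Rp, ⟪α, p.1⟫ ≠ (0 : ℝ)) (hu : ContDiffAt ℝ 2 u p)
    (h0 : dunklLap Rp κ u p = 0) :
    lapE (fun q => dWeight Rp κ q * u q) p =
      dWeight Rp κ p * (2 * ∑ α ∈ Rp, κ α * ((u p - u (reflAt α p.1, p.2)) / ⟪α, p.1⟫ ^ 2)) +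
        u p * lapE (dWeight Rp κ) p := by
  have hW := contDiffAt_dWeight (κ := κ) hp
  have hy : fderiv ℝ (dWeight Rp κ) p (0, 1) = 0 := by rw [fderiv_dWeight hp]; simp
  -- The mixed terms reassemble into derivatives of `u` in the directions of the roots.
  have hα : ∀ α : Ed d, ∑ i, α i * fderiv ℝ u p (EuclideanSpace.single i 1, 0) =
      fderiv ℝ u p (α, 0) := by
    intro α
    have e : (α, (0 : ℝ)) = ∑ i, α i • ((EuclideanSpace.single i 1 : Ed d), (0 : ℝ)) := by
      refine Prod.ext ?_ ?_
      · rw [Prod.fst_sum]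
        simp only [Prod.smul_fst]
        have := (EuclideanSpace.basisFun (Fin d) ℝ).sum_repr α
        simpa using this.symm
      · rw [Prod.snd_sum]; simp
    rw [e, map_sum]
    simp only [map_smul, smul_eq_mul]
  have hx : ∑ i, fderiv ℝ (dWeight Rp κ) p (EuclideanSpace.single i 1, 0) *
      fderiv ℝ u p (EuclideanSpace.single i 1, 0) =
      dWeight Rp κ p * ∑ α ∈ Rp, κ α * (fderiv ℝ u p (α, 0) / ⟪α, p.1⟫) := by
    simp only [fderiv_dWeight hp, EuclideanSpace.inner_single_right, Finset.mul_sum,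
      Finset.sum_mul]
    rw [Finset.sum_comm]
    refine Finset.sum_congr rfl fun α _ => ?_
    rw [← hα α, Finset.sum_div, Finset.mul_sum, Finset.mul_sum]
    refine Finset.sum_congr rfl fun i _ => ?_
    simp only [one_mul, conj_trivial]
    ring
  have hd : lapE u p = -(2 * ∑ α ∈ Rp, κ α *
      (fderiv ℝ u p (α, 0) / ⟪α, p.1⟫ - (u p - u (reflAt α p.1, p.2)) / ⟪α, p.1⟫ ^ 2)) := by
    unfold dunklLap at h0; linarith
  have hexp : lapE (fun q => dWeight Rp κ q * u q) p = dWeight Rp κ p * lapE u p +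
      2 * (∑ i, fderiv ℝ (dWeight Rp κ) p (EuclideanSpace.single i 1, 0) *
        fderiv ℝ u p (EuclideanSpace.single i 1, 0)) + u p * lapE (dWeight Rp κ) p := by
    simp only [lapE, pd2_mul hW hu, hy, Finset.sum_add_distrib, ← Finset.mul_sum]
    ring
  rw [hexp, hx, hd]
  simp only [mul_sub, Finset.sum_sub_distrib]
  ring

/-! ### Reflections and regular points -/

lemma dist_reflAt {d : ℕ} {α : Ed d} (hα : ⟪α, α⟫ = (2 : ℝ)) (x z : Ed d) :
    dist (reflAt α x) (reflAt α z) = dist x z := by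
  have e : reflAt α x - reflAt α z = (x - z) - ⟪α, x - z⟫ • α := by
    unfold reflAt; rw [inner_sub_right, sub_smul]; abel
  rw [dist_eq_norm, dist_eq_norm, e]
  set w := x - z
  rw [← sq_eq_sq₀ (norm_nonneg _) (norm_nonneg _), norm_sub_sq_real, norm_smul, mul_pow,
    inner_smul_right, real_inner_comm w α, ← real_inner_self_eq_norm_sq α, hα, Real.norm_eq_abs,
    sq_abs]
  ring

lemma isOpen_isRegular {d : ℕ} (R : Finset (Ed d)) : IsOpen {x : Ed d | isRegular R x} := by
  have : {x : Ed d | isRegular R x} = ⋂ α ∈ R, {x : Ed d | ⟪α, x⟫ ≠ (0 : ℝ)} := by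
    ext x; simp [isRegular]
  rw [this]
  exact isOpen_biInter_finset fun α _ => isOpen_ne_fun (by fun_prop) continuous_const

lemma ae_isRegular {d : ℕ} {R : Finset (Ed d)} (hR : ∀ α ∈ R, α ≠ (0 : Ed d)) :
    ∀ᵐ x : Ed d, isRegular R x := by
  unfold isRegular
  rw [Finset.eventually_all]
  intro α hα
  have hne : (LinearMap.ker (innerSL ℝ α).toLinearMap : Submodule ℝ (Ed d)) ≠ ⊤ := by
    intro htop
    have : α ∈ LinearMap.ker (innerSL ℝ α).toLinearMap := htop ▸ Submodule.mem_top
    exact hR α hα (by simpa using this)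
  have := Measure.addHaar_submodule (volume : Measure (Ed d)) _ hne
  rw [ae_iff]
  convert! this using 2
  ext x; simp

/-- The statement near a regular point. -/
lemma dunkl_limit_near_regular {d : ℕ} {R Rp : Finset (Ed d)} {κ : Ed d → ℝ}
    (hRS : IsRootSystem R Rp κ)
    {E : Set (Ed d)} (hEc : IsCompact E) (hEinv : GInvSet R E)
    {u : Ed d × ℝ → ℝ} (hu : KHarmonicOn R Rp κ u (upperHS d))
    {a : ℝ} (ha : 0 < a) (hubd : ∀ p ∈ ⋃ x0 ∈ E, coneT a 2 x0, |u p| ≤ 1)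
    {x₀ : Ed d} (hx₀ : x₀ ∈ E) (hreg : isRegular R x₀) :
    ∃ r > 0, ∀ᵐ x : Ed d, x ∈ E ∩ closedBall x₀ r → ∃ L : ℝ,
      Tendsto u (𝓝[cone a x] (x, (0 : ℝ))) (𝓝 L) := by
  obtain ⟨ρ, hρ, hρR⟩ := Metric.isOpen_iff.1 (isOpen_isRegular R) x₀ hreg
  obtain ⟨r, hr, hrρ⟩ : ∃ r > 0, 2 * r < ρ := ⟨ρ / 3, by positivity, by linarith⟩
  have hregB : ∀ t ∈ closedBall x₀ (2 * r), isRegular R t := fun t ht =>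
    hρR (closedBall_subset_ball hrρ ht)
  refine ⟨r, hr, ?_⟩
  set F := E ∩ closedBall x₀ r with hFdef
  have hFc : IsCompact F := hEc.inter_right isClosed_closedBall
  have hFne : F.Nonempty := ⟨x₀, hx₀, mem_closedBall_self hr.le⟩
  set h := min 1 (r / (2 * a)) with hh
  have hh0 : 0 < h := lt_min one_pos (by positivity)
  have hh1 : h ≤ 1 := min_le_left _ _
  have hhr : a * (2 * h) ≤ r := by
    have : h ≤ r / (2 * a) := min_le_right _ _
    rw [le_div_iff₀ (by positivity)] at this
    linarith
  have hunit : ∀ x ∈ E, ∀ p : Ed d × ℝ, 0 < p.2 → p.2 < 2 → dist p.1 x < a * p.2 → |u p| ≤ 1 :=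
    fun x hx p h0 h1 h2 => hubd p (Set.mem_iUnion₂.2 ⟨x, hx, h0, h1, h2⟩)
  -- All coefficients are bounded on the compact set `closedBall x₀ (2 * r) × [0, 2]`.
  have hcomp : IsCompact (closedBall x₀ (2 * r) ×ˢ Set.Icc (0 : ℝ) 2) :=
    (isCompact_closedBall _ _).prod isCompact_Icc
  have hpR : ∀ p ∈ closedBall x₀ (2 * r) ×ˢ Set.Icc (0 : ℝ) 2, ∀ α ∈ Rp, ⟪α, p.1⟫ ≠ (0 : ℝ) :=
    fun p hp α hα => hregB p.1 hp.1 α (hRS.pos_sub hα)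
  set S : Ed d × ℝ → ℝ := fun p => ∑ α ∈ Rp, κ α * (2 / ⟪α, p.1⟫ ^ 2) with hS
  obtain ⟨M, hM⟩ := hcomp.exists_bound_of_continuousOn
    (f := fun p => dWeight Rp κ p + (dWeight Rp κ p * (2 * S p) + |lapE (dWeight Rp κ) p|)) (by
      intro p hp
      have hW := contDiffAt_dWeight (κ := κ) (hpR p hp)
      have hSc : ContinuousAt S p := by
        refine tendsto_finsetSum _ fun α hα => ?_
        refine ContinuousAt.mul continuousAt_const (ContinuousAt.div continuousAt_const ?_ ?_)
        · fun_prop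
        · exact pow_ne_zero _ (hpR p hp α hα)
      exact (hW.continuousAt.add ((hW.continuousAt.mul (continuousAt_const.mul hSc)).add
        (continuousAt_lapE hW).abs)).continuousWithinAt)
  have hW0 : ∀ p, 0 < dWeight Rp κ p := fun p => Real.exp_pos _
  have hS0 : ∀ p, 0 ≤ S p := fun p => Finset.sum_nonneg fun α hα =>
    mul_nonneg (hRS.kappa_nonneg α (hRS.pos_sub hα)) (by positivity)
  have hMle : ∀ p ∈ closedBall x₀ (2 * r) ×ˢ Set.Icc (0 : ℝ) 2,
      dWeight Rp κ p ≤ M ∧ dWeight Rp κ p * (2 * S p) + |lapE (dWeight Rp κ) p| ≤ M := by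
    intro p hp
    have h1 := (le_abs_self _).trans (hM p hp)
    have h2 : 0 ≤ dWeight Rp κ p * (2 * S p) :=
      mul_nonneg (hW0 p).le (mul_nonneg zero_le_two (hS0 p))
    have h3 := abs_nonneg (lapE (dWeight Rp κ) p)
    have h4 := hW0 p
    constructor <;> linarith
  have hM0 : 0 ≤ M := (norm_nonneg _).trans (hM (x₀, 0)
    ⟨mem_closedBall_self (by positivity), le_rfl, zero_le_two⟩)
  have hlim := sawtooth_limit (v := fun q => dWeight Rp κ q * u q) hFc ha hh0 hM0 (by
    intro p h0 h1 h2
    obtain ⟨x, hxF, hxp⟩ := (infDist_lt_iff hFne).1 h2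
    have hp2 : p.2 < 2 := by linarith
    have hpB : p ∈ closedBall x₀ (2 * r) ×ˢ Set.Icc (0 : ℝ) 2 := by
      refine ⟨?_, h0.le, hp2.le⟩
      have := mem_closedBall.1 hxF.2
      have h3 := dist_triangle p.1 x x₀
      rw [mem_closedBall]
      nlinarith
    have hreg := hpR p hpB
    have huC : ContDiffAt ℝ 2 u p :=
      hu.1.contDiffAt ((isOpen_lt continuous_const continuous_snd).mem_nhds h0)
    have hu1 : |u p| ≤ 1 := hunit x hxF.1 p h0 hp2 hxp
    have hu2 : ∀ α ∈ Rp, |u (reflAt α p.1, p.2)| ≤ 1 := by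
      intro α hα
      have hαR := hRS.pos_sub hα
      have hmem : (reflAt α : Function.End (Ed d)) ∈ dunklGroup R :=
        Submonoid.subset_closure ⟨α, hαR, rfl⟩
      have hxE : reflAt α x ∈ E := by
        have := hEinv _ hmem
        rw [← this]
        exact Set.mem_image_of_mem _ hxF.1
      exact hunit _ hxE (reflAt α p.1, p.2) h0 hp2 (by
        simp only; rw [dist_reflAt (hRS.norm_two α hαR)]; exact hxp)
    refine ⟨(contDiffAt_dWeight hreg).mul huC, ?_, ?_⟩
    · rw [abs_mul, abs_of_pos (hW0 p)]
      calc dWeight Rp κ p * |u p| ≤ dWeight Rp κ p * 1 :=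
            mul_le_mul_of_nonneg_left hu1 (hW0 p).le
        _ ≤ M := by rw [mul_one]; exact (hMle p hpB).1
    · rw [lapE_dWeight_mul hreg huC (hu.2 p h0 (hregB _ hpB.1))]
      refine le_trans ?_ (hMle p hpB).2
      refine (abs_add_le _ _).trans (add_le_add ?_ ?_)
      · rw [abs_mul, abs_of_pos (hW0 p), abs_mul, abs_two]
        refine mul_le_mul_of_nonneg_left (mul_le_mul_of_nonneg_left ?_ zero_le_two) (hW0 p).le
        refine (Finset.abs_sum_le_sum_abs _ _).trans (Finset.sum_le_sum fun α hα => ?_)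
        have hκ := hRS.kappa_nonneg α (hRS.pos_sub hα)
        rw [abs_mul, abs_of_nonneg hκ, abs_div, abs_of_nonneg (sq_nonneg (⟪α, p.1⟫ : ℝ))]
        refine mul_le_mul_of_nonneg_left (div_le_div_of_nonneg_right ?_ (sq_nonneg _)) hκ
        have := abs_sub (u p) (u (reflAt α p.1, p.2))
        linarith [hu2 α hα]
      · rw [abs_mul]
        exact (mul_le_mul_of_nonneg_right hu1 (abs_nonneg _)).trans_eq (one_mul _))
  filter_upwards [hlim] with x hx hxF
  obtain ⟨L, hL⟩ := hx hxF
  have hxB : (x, (0 : ℝ)) ∈ closedBall x₀ (2 * r) ×ˢ Set.Icc (0 : ℝ) 2 :=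
    ⟨closedBall_subset_closedBall (by linarith) hxF.2, le_rfl, zero_le_two⟩
  have hWc : Tendsto (dWeight Rp κ) (𝓝[cone a x] (x, (0 : ℝ))) (𝓝 (dWeight Rp κ (x, 0))) :=
    (contDiffAt_dWeight (hpR _ hxB)).continuousAt.tendsto.mono_left nhdsWithin_le_nhds
  refine ⟨L / dWeight Rp κ (x, 0), (hL.div hWc (hW0 _).ne').congr fun q => ?_⟩
  exact mul_div_cancel_left₀ _ (hW0 q).ne'

/-- **Lemma 4.7.** Let `E ⊆ ℝ^d` be `G`-invariant and compact and `u` `κ`-harmonic in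
`ℝ^{d+1}₊` with `|u| ≤ 1` on `Ω = ⋃_{x⁰∈E} Γ_a^2(x⁰)`. Then for a.e. `x ∈ E`, `u(t,y)`
has a finite limit as `(t,y) ∈ Γ_a(x)` tends to `(x,0)`. -/
theorem dunkl_bounded_on_cones_imp_limit
    {d : ℕ} (hd : 1 ≤ d) (R Rp : Finset (Ed d)) (κ : Ed d → ℝ)
    (hRS : IsRootSystem R Rp κ)
    (E : Set (Ed d)) (hEc : IsCompact E) (hEinv : GInvSet R E)
    (u : Ed d × ℝ → ℝ) (hu : KHarmonicOn R Rp κ u (upperHS d))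
    (a : ℝ) (ha : 0 < a)
    (hubd : ∀ p ∈ ⋃ x0 ∈ E, coneT a 2 x0, |u p| ≤ 1) :
    ∀ᵐ x : Ed d, x ∈ E → ∃ L : ℝ,
      Tendsto u (𝓝[cone a x] (x, (0 : ℝ))) (𝓝 L) := by
  set N : Set (Ed d) := {x | isRegular R x ∧ x ∈ E ∧
    ¬ ∃ L : ℝ, Tendsto u (𝓝[cone a x] (x, (0 : ℝ))) (𝓝 L)} with hN
  have hN0 : volume N = 0 := by
    refine measure_null_of_locally_null N fun x₀ hx₀ => ?_
    obtain ⟨r, hr, hae⟩ := dunkl_limit_near_regular hRS hEc hEinv hu ha hubd hx₀.2.1 hx₀.1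
    refine ⟨N ∩ closedBall x₀ r, inter_mem_nhdsWithin _ (closedBall_mem_nhds _ hr),
      measure_mono_null ?_ (ae_iff.1 hae)⟩
    rintro x ⟨hx, hxr⟩ hcon
    exact hx.2.2 (hcon ⟨hx.2.1, hxr⟩)
  have hN' : ∀ᵐ x : Ed d, x ∉ N := measure_eq_zero_iff_ae_notMem.1 hN0
  filter_upwards [ae_isRegular hRS.nonzero, hN'] with x h1 h2 hxE
  by_contra hcon
  exact h2 ⟨h1, hxE, hcon⟩

end
end

section
/- If u is κ-harmonic in ℝ^{d+1}₊, then at every point (x,y) ∈ ℝ^{d+1}₊ with x regular, Δ_κ(u²)(x,y) = 2|∇u(x,y)|² + 2∑_{α∈R₊} κ(α) ((u(x,y) − u(σ_α(x),y))/⟨α,x⟩)², where ∇ = (∂_{x_1},…,∂_{x_d},∂_y) is the full (d+1)-dimensional gradient. In particular Δ_κ(u²) ≥ 0 at all such points. -/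
/-!
The operator `Δ_κ` satisfies `Δ_κ(u²) = 2u Δ_κu + 2|∇u|² + 2∑ κ(α)((u - u∘σ_α)/⟨α,x⟩)²` for every
`C²` function `u` (`dunklLap_sq`). The Laplacian contributes `2u Δu + 2|∇u|²` (`pd2_sq`), the
first-order terms obey the chain rule exactly, and in the reflection terms
`a² - b² = 2a(a - b) - (a - b)²` leaves the sum of squares. Harmonicity removes the first summand;
since `κ ≥ 0`, what remains is nonnegative.
-/

open MeasureTheory Filter Metric
open scoped RealInnerProductSpace Topology

noncomputable section

/-- First-order chain rule for the square, in a fixed direction. -/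
theorem fderiv_sq_apply {d : ℕ} {u : Ed d × ℝ → ℝ} {p : Ed d × ℝ}
    (hu : DifferentiableAt ℝ u p) (v : Ed d × ℝ) :
    fderiv ℝ (fun q => u q ^ 2) p v = 2 * u p * fderiv ℝ u p v := by
  rw [HasFDerivAt.fderiv (hu.hasFDerivAt.pow 2)]
  simp

/-- Product rule for the square: `∂ᵥ²(u²) = 2u ∂ᵥ²u + 2(∂ᵥu)²` wherever `u` is `C²`. -/
theorem pd2_sq {d : ℕ} {u : Ed d × ℝ → ℝ} {p : Ed d × ℝ} (hu : ContDiffAt ℝ 2 u p)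
    (v : Ed d × ℝ) :
    pd2 (fun q => u q ^ 2) p v = 2 * u p * pd2 u p v + 2 * (fderiv ℝ u p v) ^ 2 := by
  have hfirst : (fun q => fderiv ℝ (fun q => u q ^ 2) q v) =ᶠ[𝓝 p]
      fun q => 2 * u q * fderiv ℝ u q v := by
    filter_upwards [hu.eventually (by simp)] with q hq
    exact fderiv_sq_apply (hq.differentiableAt (by norm_num)) v
  have hd : DifferentiableAt ℝ u p := hu.differentiableAt (by norm_num)
  have hd' : DifferentiableAt ℝ (fun q => fderiv ℝ u q v) p :=
    ((hu.fderiv_right (m := 1) (by norm_num)).differentiableAt (by norm_num)).clm_apply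
      (differentiableAt_const v)
  have hprod := (hd.hasFDerivAt.const_mul 2).mul hd'.hasFDerivAt
  unfold pd2
  rw [hfirst.fderiv_eq]
  erw [HasFDerivAt.fderiv hprod]
  simp
  ring

/-- Carré du champ formula for `Δ_κ`, valid without harmonicity. The reflection term comes from
`a² - b² = 2a(a - b) - (a - b)²`. No regularity of `p.1` is needed, since division by zero
gives zero in every term. -/
theorem dunklLap_sq {d : ℕ} (Rp : Finset (Ed d)) (κ : Ed d → ℝ) {u : Ed d × ℝ → ℝ}
    {p : Ed d × ℝ} (hu : ContDiffAt ℝ 2 u p) :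
    dunklLap Rp κ (fun q => u q ^ 2) p =
      2 * u p * dunklLap Rp κ u p +
        (2 * ((∑ i : Fin d, (fderiv ℝ u p (EuclideanSpace.single i 1, 0)) ^ 2) +
              (fderiv ℝ u p ((0 : Ed d), 1)) ^ 2) +
          2 * ∑ α ∈ Rp, κ α * ((u p - u (reflAt α p.1, p.2)) / ⟪α, p.1⟫) ^ 2) := by
  have hsum : ∑ α ∈ Rp, κ α * (fderiv ℝ (fun q => u q ^ 2) p (α, 0) / ⟪α, p.1⟫ -
        (u p ^ 2 - u (reflAt α p.1, p.2) ^ 2) / ⟪α, p.1⟫ ^ 2) =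
      2 * u p * (∑ α ∈ Rp, κ α * (fderiv ℝ u p (α, 0) / ⟪α, p.1⟫ -
        (u p - u (reflAt α p.1, p.2)) / ⟪α, p.1⟫ ^ 2)) +
      ∑ α ∈ Rp, κ α * ((u p - u (reflAt α p.1, p.2)) / ⟪α, p.1⟫) ^ 2 := by
    rw [Finset.mul_sum, ← Finset.sum_add_distrib]
    refine Finset.sum_congr rfl fun α _ => ?_
    rw [fderiv_sq_apply (hu.differentiableAt (by norm_num))]
    ring
  simp only [dunklLap, lapE]
  rw [hsum]
  simp only [pd2_sq hu, Finset.sum_add_distrib, ← Finset.mul_sum]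
  ring

/-- **Lemma 5.2.** If `u` is `κ`-harmonic in `ℝ^{d+1}₊`, then at every point with regular
`x`-coordinate,
`Δ_κ(u²) = 2|∇u|² + 2 ∑_{α∈R₊} κ(α) ((u(x,y) − u(σ_α(x),y))/⟨α,x⟩)²`;
in particular `Δ_κ(u²) ≥ 0` at all such points. -/
theorem dunkl_lap_sq_identity
    {d : ℕ} (hd : 1 ≤ d) (R Rp : Finset (Ed d)) (κ : Ed d → ℝ)
    (hRS : IsRootSystem R Rp κ)
    (u : Ed d × ℝ → ℝ) (hu : KHarmonicOn R Rp κ u (upperHS d)) :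
    ∀ p ∈ upperHS d, isRegular R p.1 →
      (dunklLap Rp κ (fun q => u q ^ 2) p =
          2 * ((∑ i : Fin d, (fderiv ℝ u p (EuclideanSpace.single i 1, 0)) ^ 2) +
              (fderiv ℝ u p ((0 : Ed d), 1)) ^ 2) +
            2 * ∑ α ∈ Rp, κ α * ((u p - u (reflAt α p.1, p.2)) / ⟪α, p.1⟫) ^ 2) ∧
      0 ≤ dunklLap Rp κ (fun q => u q ^ 2) p := by
  intro p hp hreg
  have hopen : IsOpen (upperHS d) := isOpen_lt continuous_const continuous_snd
  have hC : ContDiffAt ℝ 2 u p := hu.1.contDiffAt (hopen.mem_nhds hp)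
  have key := dunklLap_sq Rp κ hC
  rw [hu.2 p hp hreg, mul_zero, zero_add] at key
  refine ⟨key, ?_⟩
  rw [key]
  have hR : 0 ≤ ∑ α ∈ Rp, κ α * ((u p - u (reflAt α p.1, p.2)) / ⟪α, p.1⟫) ^ 2 :=
    Finset.sum_nonneg fun α hα =>
      mul_nonneg (hRS.kappa_nonneg α (hRS.pos_sub hα)) (sq_nonneg _)
  positivity

end
end

section
/- Let E be a G-invariant compact subset of ℝ^d, let a,h > 0, and Ω = ∪_{x⁰∈E} Γ_a^h(x⁰). Then there exists a family {Ω_ε}_{0<ε<h/3} of G-invariant open subsets of ℝ^{d+1}₊ such that: (i) the closure of Ω_ε is contained in Ω, and Ω_{ε₁} ⊆ Ω_{ε₂} whenever ε₂ < ε₁; (ii) ∪_{0<ε<h/3} Ω_ε = Ω; (iii) for each ε there is a C^∞ function δ_ε : ℝ^d → ℝ with δ_ε(σ(x)) = δ_ε(x) for all σ ∈ G and |∂_j δ_ε(x)| ≤ 1 for all x ∈ ℝ^d and j = 1,…,d, such that Ω_ε = {(x,y) : δ_ε(x) < a y, 0 < y < h − ε}. -/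
/-!
Let `D(x)` be the distance from `x` to `E`. For `E ≠ ∅` the region `Ω` is
`{(x, y) : D(x) < a y, 0 < y < h}`, and `D` is `1`-Lipschitz and `G`-invariant since `G` acts by
linear isometries preserving `E`. With a smooth radial probability density `ρ` supported in the
unit ball, put `δ_ε(x) = ∫ ρ(z) D(x - ε z) dz + 2 ε`. This is smooth, `1`-Lipschitz, and
`G`-invariant because `ρ` is radial.

Since `D` is `1`-Lipschitz, the integral changes by at most `|x - y| + |r - s|` when `(x, r)` is
replaced by `(y, s)` (`abs_mollify_sub_le`). Comparing the scales `ε` and `0` gives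
`D + ε ≤ δ_ε ≤ D + 3 ε`, hence the closure property and the exhaustion of `Ω`; comparing two
scales shows that `δ_ε` increases with `ε`, because the term `2 ε` dominates the change of the
integral.
-/

open MeasureTheory Filter Metric
open scoped RealInnerProductSpace Topology

noncomputable section

/-! ### A radial mollifier -/

/-- The radial bump `z ↦ s(1 - ‖z‖²)`, with `s` the smooth transition function; it vanishes
outside the unit ball. -/
def radialBump {d : ℕ} (z : Ed d) : ℝ := Real.smoothTransition (1 - ‖z‖ ^ 2)

/-- The radial bump normalized to have integral `1`. -/
def radialMollifier {d : ℕ} (z : Ed d) : ℝ := radialBump z / ∫ w : Ed d, radialBump w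

/-- The mollification of `D` at scale `r`, namely `x ↦ ∫ ρ(z) D(x - r z) dz`. Written in this
form it makes sense for every real `r`, and returns `D` itself at `r = 0`. -/
def mollify {d : ℕ} (D : Ed d → ℝ) (r : ℝ) (x : Ed d) : ℝ :=
  ∫ z : Ed d, radialMollifier z * D (x - r • z)

lemma radialBump_contDiff {d : ℕ} : ContDiff ℝ (⊤ : ℕ∞) (radialBump : Ed d → ℝ) :=
  Real.smoothTransition.contDiff.comp (contDiff_const.sub (contDiff_norm_sq ℝ))

lemma radialBump_eq_zero {d : ℕ} {z : Ed d} (hz : 1 ≤ ‖z‖) : radialBump z = 0 :=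
  Real.smoothTransition.zero_of_nonpos (by nlinarith)

lemma radialBump_hasCompactSupport {d : ℕ} :
    HasCompactSupport (radialBump : Ed d → ℝ) := by
  refine HasCompactSupport.intro (isCompact_closedBall (0 : Ed d) 1) fun z hz => ?_
  refine radialBump_eq_zero ?_
  simp only [mem_closedBall, dist_zero_right, not_le] at hz
  exact hz.le

lemma radialBump_integral_pos (d : ℕ) : 0 < ∫ w : Ed d, radialBump w := by
  refine radialBump_contDiff.continuous.integral_pos_of_hasCompactSupport_nonneg_nonzero
    radialBump_hasCompactSupport (fun z => Real.smoothTransition.nonneg _) (x := 0) ?_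
  simp [radialBump]

lemma radialMollifier_nonneg {d : ℕ} (z : Ed d) : 0 ≤ radialMollifier z :=
  div_nonneg (Real.smoothTransition.nonneg _) (radialBump_integral_pos d).le

lemma radialMollifier_contDiff {d : ℕ} : ContDiff ℝ (⊤ : ℕ∞) (radialMollifier : Ed d → ℝ) :=
  radialBump_contDiff.div_const _

lemma radialMollifier_eq_zero {d : ℕ} {z : Ed d} (hz : 1 ≤ ‖z‖) : radialMollifier z = 0 := by
  simp [radialMollifier, radialBump_eq_zero hz]

lemma radialMollifier_hasCompactSupport {d : ℕ} :
    HasCompactSupport (radialMollifier : Ed d → ℝ) := by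
  refine HasCompactSupport.intro (isCompact_closedBall (0 : Ed d) 1) fun z hz => ?_
  refine radialMollifier_eq_zero ?_
  simp only [mem_closedBall, dist_zero_right, not_le] at hz
  exact hz.le

lemma radialMollifier_integral (d : ℕ) : ∫ z : Ed d, radialMollifier z = 1 := by
  simp only [radialMollifier]
  rw [integral_div, div_self (radialBump_integral_pos d).ne']

lemma radialMollifier_integrable {d : ℕ} : Integrable (radialMollifier : Ed d → ℝ) :=
  radialMollifier_contDiff.continuous.integrable_of_hasCompactSupport
    radialMollifier_hasCompactSupport

/-! ### Mollification of a `1`-Lipschitz function -/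

lemma mollify_integrand_integrable {d : ℕ} {D : Ed d → ℝ} (hD : Continuous D) (r : ℝ)
    (x : Ed d) : Integrable fun z : Ed d => radialMollifier z * D (x - r • z) := by
  refine Continuous.integrable_of_hasCompactSupport ?_
    radialMollifier_hasCompactSupport.mul_right
  exact radialMollifier_contDiff.continuous.mul (hD.comp (by fun_prop))

lemma mollify_zero {d : ℕ} (D : Ed d → ℝ) (x : Ed d) : mollify D 0 x = D x := by
  simp [mollify, integral_mul_const, radialMollifier_integral]

/-- Joint Lipschitz estimate in the point and in the scale. Taking `r = s` bounds the gradient,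
`s = 0` compares `mollify D r` with `D`, and `x = y` compares two scales. -/
lemma abs_mollify_sub_le {d : ℕ} {D : Ed d → ℝ} (hD : LipschitzWith 1 D) (r s : ℝ)
    (x y : Ed d) : |mollify D r x - mollify D s y| ≤ dist x y + |r - s| := by
  unfold mollify
  rw [← integral_sub (mollify_integrand_integrable hD.continuous r x)
    (mollify_integrand_integrable hD.continuous s y), ← Real.norm_eq_abs]
  have hint : Integrable fun z : Ed d => radialMollifier z * (dist x y + |r - s|) :=
    radialMollifier_integrable.mul_const _
  refine (norm_integral_le_of_norm_le hint (Eventually.of_forall fun z => ?_)).trans ?_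
  · rw [← mul_sub, norm_mul, Real.norm_of_nonneg (radialMollifier_nonneg z)]
    rcases le_or_gt 1 ‖z‖ with hz | hz
    · simp [radialMollifier_eq_zero hz]
    · refine mul_le_mul_of_nonneg_left ?_ (radialMollifier_nonneg z)
      have h1 : ‖D (x - r • z) - D (y - s • z)‖ ≤ ‖(x - r • z) - (y - s • z)‖ := by
        simpa [dist_eq_norm] using hD.dist_le_mul (x - r • z) (y - s • z)
      have h2 : (x - r • z) - (y - s • z) = (x - y) - (r - s) • z := by module
      have h3 : ‖(r - s) • z‖ ≤ |r - s| := by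
        rw [norm_smul, Real.norm_eq_abs]
        exact mul_le_of_le_one_right (abs_nonneg _) hz.le
      rw [h2] at h1
      rw [dist_eq_norm]
      linarith [norm_sub_le (x - y) ((r - s) • z)]
  · rw [integral_mul_const, radialMollifier_integral, one_mul]

/-- After the substitution `w = r z` the mollification is a convolution with the smooth compactly
supported function `w ↦ ρ(w / r)`. -/
lemma mollify_contDiff {d : ℕ} {D : Ed d → ℝ} (hD : Continuous D) {r : ℝ} (hr : 0 < r) :
    ContDiff ℝ (⊤ : ℕ∞) (mollify D r) := by
  let ψ : Ed d → ℝ := fun w => radialMollifier (r⁻¹ • w)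
  have hψs : ContDiff ℝ (⊤ : ℕ∞) ψ := radialMollifier_contDiff.comp (contDiff_const_smul _)
  have hψc : HasCompactSupport ψ :=
    radialMollifier_hasCompactSupport.comp_smul (inv_ne_zero hr.ne')
  have hconv := hψc.contDiff_convolution_left (ContinuousLinearMap.mul ℝ ℝ)
    hψs (hD.locallyIntegrable (μ := (volume : Measure (Ed d))))
  have heq : mollify D r = fun x => |(r ^ Module.finrank ℝ (Ed d))⁻¹| *
      MeasureTheory.convolution ψ D (ContinuousLinearMap.mul ℝ ℝ) volume x := by
    funext x
    have key := Measure.integral_comp_smul (volume : Measure (Ed d))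
      (fun w => ψ w * D (x - w)) r
    simp only [ψ, smul_smul, inv_mul_cancel₀ hr.ne', one_smul, smul_eq_mul] at key
    simp only [mollify, convolution_def, ContinuousLinearMap.mul_apply', ψ]
    exact key
  rw [heq]
  exact contDiff_const.mul hconv

/-- Mollification by a radial kernel preserves invariance under a linear isometry. -/
lemma mollify_comp_isometry {d : ℕ} {D : Ed d → ℝ} (L : Ed d ≃ₗᵢ[ℝ] Ed d)
    (hL : ∀ x, D (L x) = D x) (r : ℝ) (x : Ed d) : mollify D r (L x) = mollify D r x := by
  unfold mollify
  rw [← L.measurePreserving.integral_comp L.toHomeomorph.measurableEmbedding]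
  refine integral_congr_ae (Eventually.of_forall fun z => ?_)
  have h1 : (radialMollifier (L z) : ℝ) = radialMollifier z := by
    simp [radialMollifier, radialBump]
  have h2 : L x - r • L z = L (x - r • z) := by simp
  simp only [h1, h2, hL]

/-! ### The reflection group acts by linear isometries -/

lemma norm_reflAt {d : ℕ} {α : Ed d} (hα : ⟪α, α⟫ = (2 : ℝ)) (x : Ed d) :
    ‖reflAt α x‖ = ‖x‖ := by
  have h : ‖reflAt α x‖ ^ 2 = ‖x‖ ^ 2 := by
    rw [reflAt, norm_sub_sq_real, norm_smul, inner_smul_right, mul_pow,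
      ← real_inner_self_eq_norm_sq α, hα, real_inner_comm x α, Real.norm_eq_abs, sq_abs]
    ring
  exact (sq_eq_sq₀ (norm_nonneg _) (norm_nonneg _)).1 h

lemma exists_isometry_of_mem_dunklGroup {d : ℕ} {R : Finset (Ed d)}
    (hn2 : ∀ α ∈ R, ⟪α, α⟫ = (2 : ℝ)) {σ : Function.End (Ed d)} (hσ : σ ∈ dunklGroup R) :
    ∃ L : Ed d ≃ₗᵢ[ℝ] Ed d, ∀ x, σ x = L x := by
  induction hσ using Submonoid.closure_induction with
  | mem f hf =>
    obtain ⟨α, hα, rfl⟩ := hf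
    let T : Ed d →ₗᵢ[ℝ] Ed d :=
      { toFun := reflAt α
        map_add' := fun x y => by simp only [reflAt, inner_add_right]; module
        map_smul' := fun c x => by
          simp only [reflAt, inner_smul_right, RingHom.id_apply]; module
        norm_map' := norm_reflAt (hn2 α hα) }
    exact ⟨T.toLinearIsometryEquiv rfl, fun x => rfl⟩
  | one => exact ⟨LinearIsometryEquiv.refl ℝ _, fun x => rfl⟩
  | mul f g _ _ hf hg =>
    obtain ⟨F, hF⟩ := hf
    obtain ⟨K, hK⟩ := hg
    refine ⟨K.trans F, fun x => ?_⟩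
    change f (g x) = F (K x)
    rw [hK, hF]

lemma image_sawtooth_eq {d : ℕ} (L : Ed d ≃ₗᵢ[ℝ] Ed d) {δ : Ed d → ℝ}
    (hδ : ∀ x, δ (L x) = δ x) (a b : ℝ) :
    (fun p : Ed d × ℝ => (L p.1, p.2)) '' {p | δ p.1 < a * p.2 ∧ 0 < p.2 ∧ p.2 < b} =
      {p | δ p.1 < a * p.2 ∧ 0 < p.2 ∧ p.2 < b} := by
  ext ⟨x, y⟩
  constructor
  · rintro ⟨⟨x', y'⟩, hp, hxy⟩
    simp only [Prod.mk.injEq] at hxy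
    obtain ⟨rfl, rfl⟩ := hxy
    simpa [hδ] using hp
  · intro hp
    refine ⟨(L.symm x, y), ?_, by simp⟩
    have := hδ (L.symm x)
    rw [L.apply_symm_apply] at this
    simpa [← this] using hp

lemma isOpen_sawtooth {d : ℕ} {δ : Ed d → ℝ} (hδ : Continuous δ) (a b : ℝ) :
    IsOpen {p : Ed d × ℝ | δ p.1 < a * p.2 ∧ 0 < p.2 ∧ p.2 < b} := by
  have h1 : IsOpen {p : Ed d × ℝ | δ p.1 < a * p.2} := isOpen_lt (by fun_prop) (by fun_prop)
  have h2 : IsOpen {p : Ed d × ℝ | 0 < p.2} := isOpen_lt (by fun_prop) (by fun_prop)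
  have h3 : IsOpen {p : Ed d × ℝ | p.2 < b} := isOpen_lt (by fun_prop) (by fun_prop)
  exact h1.inter (h2.inter h3)

/-- The sawtooth region over `E ≠ ∅` in terms of the distance function to `E`. -/
lemma iUnion_coneT_eq {d : ℕ} {E : Set (Ed d)} (hE : E.Nonempty) (a h : ℝ) :
    (⋃ x0 ∈ E, coneT a h x0) =
      {p : Ed d × ℝ | infDist p.1 E < a * p.2 ∧ 0 < p.2 ∧ p.2 < h} := by
  ext ⟨x, y⟩
  simp only [Set.mem_iUnion, coneT, Set.mem_ofPred_eq, exists_prop, infDist_lt_iff hE]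
  constructor
  · rintro ⟨x0, hx0, h1, h2, h3⟩
    exact ⟨⟨x0, hx0, h3⟩, h1, h2⟩
  · rintro ⟨⟨x0, hx0, h3⟩, h1, h2⟩
    exact ⟨x0, hx0, h1, h2, h3⟩

/-- **Lemma 5.4 (approximating sawtooth regions).** For a `G`-invariant compact
`E ⊆ ℝ^d` and `a,h > 0`, with `Ω = ⋃_{x⁰∈E} Γ_a^h(x⁰)`, there is a family
`{Ω_ε}_{0<ε<h/3}` of `G`-invariant open subsets of `ℝ^{d+1}₊`, increasing to `Ω` as
`ε → 0+`, with closures contained in `Ω`, of the form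
`Ω_ε = {(x,y) : δ_ε(x) < a y, 0 < y < h − ε}` for `G`-invariant `C^∞` functions `δ_ε`
with `|∂_j δ_ε| ≤ 1`. -/
theorem exists_sawtooth_approximation
    {d : ℕ} (hd : 1 ≤ d) (R : Finset (Ed d))
    (hnz : ∀ α ∈ R, α ≠ (0 : Ed d))
    (hn2 : ∀ α ∈ R, ⟪α, α⟫ = (2 : ℝ))
    (hrm : ∀ α ∈ R, ∀ β ∈ R, reflAt α β ∈ R)
    (E : Set (Ed d)) (hEc : IsCompact E) (hEinv : GInvSet R E)
    (a h : ℝ) (ha : 0 < a) (hh : 0 < h) :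
    ∃ (Ωf : ℝ → Set (Ed d × ℝ)) (δf : ℝ → Ed d → ℝ),
      (∀ ε ∈ Set.Ioo (0 : ℝ) (h / 3),
        IsOpen (Ωf ε) ∧
        Ωf ε ⊆ upperHS d ∧
        (∀ σ ∈ dunklGroup R, (fun p : Ed d × ℝ => (σ p.1, p.2)) '' Ωf ε = Ωf ε) ∧
        closure (Ωf ε) ⊆ (⋃ x0 ∈ E, coneT a h x0) ∧
        ContDiff ℝ (⊤ : ℕ∞) (δf ε) ∧
        (∀ σ ∈ dunklGroup R, ∀ x : Ed d, δf ε (σ x) = δf ε x) ∧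
        (∀ x : Ed d, ∀ j : Fin d, |fderiv ℝ (δf ε) x (EuclideanSpace.single j 1)| ≤ 1) ∧
        Ωf ε = {p : Ed d × ℝ | δf ε p.1 < a * p.2 ∧ 0 < p.2 ∧ p.2 < h - ε}) ∧
      (∀ ε₁ ∈ Set.Ioo (0 : ℝ) (h / 3), ∀ ε₂ ∈ Set.Ioo (0 : ℝ) (h / 3),
        ε₂ < ε₁ → Ωf ε₁ ⊆ Ωf ε₂) ∧
      (⋃ ε ∈ Set.Ioo (0 : ℝ) (h / 3), Ωf ε) = ⋃ x0 ∈ E, coneT a h x0 := by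
  rcases E.eq_empty_or_nonempty with rfl | hE
  · -- Here `Ω = ∅`, and the constant `a h` cuts out the empty region.
    refine ⟨fun _ => ∅, fun _ _ => a * h, fun ε hε => ?_, by simp, by simp⟩
    refine ⟨isOpen_empty, Set.empty_subset _, by simp, by simp, contDiff_const, by simp,
      by simp, ?_⟩
    symm
    rw [Set.eq_empty_iff_forall_notMem]
    rintro ⟨x, y⟩ ⟨h1, h2, h3⟩
    have : a * y < a * h := mul_lt_mul_of_pos_left (by linarith [hε.1]) ha
    linarith
  let D : Ed d → ℝ := fun x => infDist x E
  have hD : LipschitzWith 1 D := lipschitz_infDist_pt E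
  let δ : ℝ → Ed d → ℝ := fun ε x => mollify D ε x + 2 * ε
  have hlow : ∀ ε, 0 < ε → ∀ x, D x + ε ≤ δ ε x := fun ε hε x => by
    have := abs_mollify_sub_le hD ε 0 x x
    rw [mollify_zero, dist_self, sub_zero, abs_of_pos hε] at this
    linarith [(abs_le.1 this).1]
  have hupp : ∀ ε, 0 < ε → ∀ x, δ ε x ≤ D x + 3 * ε := fun ε hε x => by
    have := abs_mollify_sub_le hD ε 0 x x
    rw [mollify_zero, dist_self, sub_zero, abs_of_pos hε] at this
    linarith [(abs_le.1 this).2]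
  have hmono : ∀ ε₁ ε₂, ε₂ < ε₁ → ∀ x, δ ε₂ x ≤ δ ε₁ x := fun ε₁ ε₂ h12 x => by
    have := abs_mollify_sub_le hD ε₁ ε₂ x x
    rw [dist_self, abs_of_pos (sub_pos.2 h12)] at this
    linarith [(abs_le.1 this).1]
  have hsmooth : ∀ ε, 0 < ε → ContDiff ℝ (⊤ : ℕ∞) (δ ε) := fun ε hε =>
    (mollify_contDiff hD.continuous hε).add contDiff_const
  have hlip : ∀ ε, LipschitzWith 1 (δ ε) := fun ε => by
    refine LipschitzWith.of_dist_le_mul fun x y => ?_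
    have := abs_mollify_sub_le hD ε ε x y
    simpa [δ, Real.dist_eq] using this
  have hinv : ∀ σ ∈ dunklGroup R, ∃ L : Ed d ≃ₗᵢ[ℝ] Ed d,
      (∀ x, σ x = L x) ∧ ∀ ε x, δ ε (L x) = δ ε x := fun σ hσ => by
    obtain ⟨L, hL⟩ := exists_isometry_of_mem_dunklGroup hn2 hσ
    refine ⟨L, hL, fun ε x => ?_⟩
    have hDL : ∀ x, D (L x) = D x := fun x => by
      have himg : L '' E = E := by
        conv_rhs => rw [← hEinv σ hσ]
        exact Set.image_congr fun y _ => (hL y).symm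
      change infDist (L x) E = infDist x E
      conv_lhs => rw [← himg]
      exact infDist_image L.isometry
    simp only [δ, mollify_comp_isometry L hDL]
  rw [iUnion_coneT_eq hE]
  refine ⟨fun ε => {p | δ ε p.1 < a * p.2 ∧ 0 < p.2 ∧ p.2 < h - ε}, δ, fun ε hε => ?_,
    fun ε₁ _ ε₂ _ h12 => ?_, ?_⟩
  · refine ⟨isOpen_sawtooth (hsmooth ε hε.1).continuous _ _, fun p hp => hp.2.1, fun σ hσ => ?_,
      ?_, hsmooth ε hε.1, fun σ hσ x => ?_, fun x j => ?_, rfl⟩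
    · obtain ⟨L, hL, hδL⟩ := hinv σ hσ
      simp only [hL]
      exact image_sawtooth_eq L (hδL ε) _ _
    · have hcont := (hsmooth ε hε.1).continuous
      have hcl1 : IsClosed {p : Ed d × ℝ | δ ε p.1 ≤ a * p.2} :=
        isClosed_le (by fun_prop) (by fun_prop)
      have hcl2 : IsClosed {p : Ed d × ℝ | p.2 ≤ h - ε} :=
        isClosed_le (by fun_prop) (by fun_prop)
      have hcl : IsClosed {p : Ed d × ℝ | δ ε p.1 ≤ a * p.2 ∧ p.2 ≤ h - ε} :=
        hcl1.inter hcl2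
      have hsub : {p : Ed d × ℝ | δ ε p.1 < a * p.2 ∧ 0 < p.2 ∧ p.2 < h - ε} ⊆
          {p : Ed d × ℝ | δ ε p.1 ≤ a * p.2 ∧ p.2 ≤ h - ε} :=
        fun p hp => ⟨hp.1.le, hp.2.2.le⟩
      refine (closure_minimal hsub hcl).trans ?_
      rintro ⟨x, y⟩ ⟨h1, h2⟩
      have h3 := hlow ε hε.1 x
      have h4 : 0 ≤ D x := infDist_nonneg
      have h5 := hε.1
      simp only at h1 h2
      -- The gap `D + ε ≤ δ ε` keeps the closure away from `y = 0`.
      have h6 : 0 < a * y := by linarith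
      refine ⟨?_, pos_of_mul_pos_right h6 ha.le, ?_⟩
      · change D x < a * y
        linarith
      · change y < h
        linarith
    · obtain ⟨L, hL, hδL⟩ := hinv σ hσ
      rw [hL, hδL]
    · have h1 := (fderiv ℝ (δ ε) x).le_opNorm (EuclideanSpace.single j 1)
      have h2 := norm_fderiv_le_of_lipschitz ℝ (hlip ε) (x₀ := x)
      simp only [PiLp.norm_single, norm_one, mul_one, Real.norm_eq_abs] at h1
      exact h1.trans (by simpa using h2)
  · rintro ⟨x, y⟩ ⟨h1, h2, h3⟩
    exact ⟨(hmono ε₁ ε₂ h12 x).trans_lt h1, h2, h3.trans (by linarith)⟩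
  · ext ⟨x, y⟩
    simp only [Set.mem_iUnion, Set.mem_ofPred_eq, exists_prop]
    constructor
    · rintro ⟨ε, hε, h1, h2, h3⟩
      have := hlow ε hε.1 x
      have := hε.1
      exact ⟨by change D x < a * y; linarith, h2, by linarith⟩
    · rintro ⟨h1, h2, h3⟩
      have h1' : 0 < a * y - D x := sub_pos.2 h1
      obtain ⟨ε, hε0, hε⟩ := exists_between
        (lt_min (lt_min (div_pos hh three_pos) (sub_pos.2 h3)) (div_pos h1' three_pos))
      simp only [lt_min_iff] at hε
      have := hupp ε hε0 x
      refine ⟨ε, ⟨hε0, hε.1.1⟩, ?_, h2, ?_⟩ <;> linarith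

end
end
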